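/- Case A: Let l be a prime with l ≡ 3 (mod 4) and l > 3, let r ≥ 1, and let N = l^r. Assume f = φ(N)/2 (the index 2 condition), and set h = h(Q(√-l)). Then f and h are odd, and there exist integers a, b such that 4p^h = a² + l b², a ≡ -2 p^{(f+h)/2} (mod l), and G(χ) = (1/2) p^{(f-h)/2} (a + b √-l). -/

import Mathlib

open Complex Polynomial IntermediateField

/-- The complex primitive `p`-th root of unity `exp(2πi/p)`. -/
noncomputable def zetaP (p : ℕ) : ℂ := Complex.exp (2 * Real.pi * Complex.I / p)

/-- The Gauss sum `G(χ^λ) = ∑_{x ∈ F, x ≠ 0} χ^λ(x) ζ_p^{T(x)}`, where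
`T` is the trace map from `F` down to `ZMod p`. -/
noncomputable def gaussSumN (p : ℕ) {F : Type} [Field F] [Fintype F] [Algebra (ZMod p) F]
    (χ : MulChar F ℂ) (lam : ℕ) : ℂ :=
  letI : DecidableEq F := Classical.decEq F
  ∑ x ∈ Finset.univ.filter (fun x : F => x ≠ 0),
    (χ ^ lam) x * zetaP p ^ (Algebra.trace (ZMod p) F x).val

/-- `√-m = i√m ∈ ℂ`. -/
noncomputable def sqrtNeg (m : ℕ) : ℂ := Real.sqrt m * Complex.I

theorem sqrtNeg_sq (m : ℕ) : sqrtNeg m ^ 2 = -(m : ℂ) := by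
  have h : ((Real.sqrt m : ℝ) : ℂ) ^ 2 = ((m : ℝ) : ℂ) := by
    rw [← Complex.ofReal_pow, Real.sq_sqrt (by positivity)]
  simp only [sqrtNeg, mul_pow, Complex.I_sq, h]
  push_cast
  ring

theorem isIntegral_sqrtNeg (m : ℕ) : IsIntegral ℚ (sqrtNeg m) := by
  refine ⟨X ^ 2 + C (m : ℚ), monic_X_pow_add_C _ (by norm_num), ?_⟩
  simp [sqrtNeg_sq]

/-- The class number `h(ℚ(√-m))` of the quadratic field `ℚ(√-m) ⊆ ℂ`. -/
noncomputable def classNumSqrtNeg (m : ℕ) : ℕ :=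
  haveI : FiniteDimensional ℚ ℚ⟮sqrtNeg m⟯ :=
    IntermediateField.adjoin.finiteDimensional (isIntegral_sqrtNeg m)
  haveI : CharZero ℚ⟮sqrtNeg m⟯ :=
    charZero_of_injective_algebraMap (algebraMap ℚ ℚ⟮sqrtNeg m⟯).injective
  haveI : NumberField ℚ⟮sqrtNeg m⟯ := ⟨⟩
  NumberField.classNumber ℚ⟮sqrtNeg m⟯

/-- `√p* = √p` if `p ≡ 1 (mod 4)` and `i√p` if `p ≡ 3 (mod 4)`. -/
noncomputable def sqrtPStar (p : ℕ) : ℂ :=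
  if p % 4 = 1 then (Real.sqrt p : ℂ) else (Real.sqrt p : ℂ) * Complex.I

namespace IdxTwo
open MeasureTheory Set Filter Topology HurwitzZeta

lemma norm_z (x : ℝ) : ‖cexp (2 * Real.pi * I * x)‖ = 1 := by
  rw [show (2 * Real.pi * I * x : ℂ) = ((2 * Real.pi * x : ℝ) : ℂ) * I by push_cast; ring]
  exact Complex.norm_exp_ofReal_mul_I _

lemma z_re_lt (x : ℝ) (hx0 : 0 < x) (hx1 : x < 1) : (cexp (2 * Real.pi * I * x)).re < 1 := by
  have h1 : (cexp (2 * Real.pi * I * x)).re ≤ 1 := by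
    have := Complex.abs_re_le_norm (cexp (2 * Real.pi * I * x))
    rw [norm_z] at this; exact (abs_le.mp this).2
  refine lt_of_le_of_ne h1 ?_
  rw [show (2 * Real.pi * I * x : ℂ) = ((2 * Real.pi * x : ℝ) : ℂ) * I by push_cast; ring,
    Complex.exp_ofReal_mul_I_re]
  intro h
  rw [Real.cos_eq_one_iff_of_lt_of_lt] at h
  · have := Real.pi_pos
    have : 0 < 2 * Real.pi * x := by positivity
    linarith
  · have := Real.pi_pos
    have : 0 < 2 * Real.pi * x := by positivity
    linarith
  · have := Real.pi_pos
    nlinarith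

lemma re_pos_aux {z : ℂ} (hz1 : z.re < 1) {t : ℝ} (ht : 0 ≤ t) :
    0 < (1 - z * (Real.exp (-t) : ℂ)).re := by
  have h1 : Real.exp (-t) ≤ 1 := by rw [Real.exp_le_one_iff]; linarith
  have h0 := Real.exp_pos (-t)
  have : (1 - z * (Real.exp (-t) : ℂ)).re = 1 - z.re * Real.exp (-t) := by
    rw [Complex.sub_re, Complex.re_mul_ofReal, Complex.one_re]
  rw [this]
  nlinarith

lemma re_lower_aux {z : ℂ} {t : ℝ} (ht : 0 ≤ t) :
    min 1 (1 - z.re) ≤ ‖1 - z * (Real.exp (-t) : ℂ)‖ := by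
  refine le_trans ?_ (Complex.re_le_norm _)
  have h1 : Real.exp (-t) ≤ 1 := by rw [Real.exp_le_one_iff]; linarith
  have h0 := Real.exp_pos (-t)
  have : (1 - z * (Real.exp (-t) : ℂ)).re = 1 - z.re * Real.exp (-t) := by
    rw [Complex.sub_re, Complex.re_mul_ofReal, Complex.one_re]
  rw [this]
  rcases le_total 0 z.re with h | h
  · exact (min_le_right _ _).trans (by nlinarith)
  · exact (min_le_left _ _).trans (by nlinarith)

noncomputable def FF (z : ℂ) (t : ℝ) : ℂ := z * (Real.exp (-t) : ℂ) / (1 - z * (Real.exp (-t) : ℂ))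

lemma FF_cont {z : ℂ} (hz1 : z.re < 1) : ContinuousOn (FF z) (Ici 0) := by
  unfold FF
  refine ContinuousOn.div (by fun_prop) (by fun_prop) ?_
  intro t ht h
  have := re_pos_aux hz1 (t := t) ht
  rw [h] at this; simp at this

lemma FF_bound {z : ℂ} (hz : ‖z‖ = 1) (hz1 : z.re < 1) {t : ℝ} (ht : 0 ≤ t) :
    ‖FF z t‖ ≤ (min 1 (1 - z.re))⁻¹ * Real.exp (-t) := by
  have hc : 0 < min 1 (1 - z.re) := lt_min one_pos (by linarith)
  unfold FF
  rw [norm_div, norm_mul, hz, one_mul, Complex.norm_of_nonneg (Real.exp_pos _).le, div_eq_inv_mul]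
  gcongr
  exact re_lower_aux ht

lemma FF_int {z : ℂ} (hz : ‖z‖ = 1) (hz1 : z.re < 1) : IntegrableOn (FF z) (Ioi 0) := by
  refine Integrable.mono' (g := fun t => (min 1 (1 - z.re))⁻¹ * Real.exp (-t)) ?_ ?_ ?_
  · exact (integrableOn_exp_neg_Ioi 0).const_mul _
  · exact ((FF_cont hz1).mono Ioi_subset_Ici_self).aestronglyMeasurable measurableSet_Ioi
  · refine (ae_restrict_iff' measurableSet_Ioi).mpr (Eventually.of_forall fun t ht => ?_)
    exact FF_bound hz hz1 (le_of_lt ht)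

lemma FF_integral {z : ℂ} (hz : ‖z‖ = 1) (hz1 : z.re < 1) :
    ∫ t in Ioi (0:ℝ), FF z t = - log (1 - z) := by
  have key := integral_Ioi_of_hasDerivAt_of_tendsto (a := (0:ℝ)) (m := (0:ℂ))
    (f := fun t : ℝ => log (1 - z * (Real.exp (-t) : ℂ))) (f' := FF z) ?_ ?_ (FF_int hz hz1) ?_
  · rw [key]; simp
  · refine ContinuousAt.continuousWithinAt ?_
    refine ContinuousAt.clog (by fun_prop) ?_
    left; exact re_pos_aux hz1 le_rfl
  · intro t ht
    have h1 : HasDerivAt (fun t : ℝ => 1 - z * (Real.exp (-t) : ℂ)) (z * (Real.exp (-t) : ℂ)) t := by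
      have h2 : HasDerivAt (fun t : ℝ => Real.exp (-t)) (Real.exp (-t) * (-1)) t :=
        (hasDerivAt_neg t).exp
      have h3 := ((h2.ofReal_comp).const_mul z).const_sub 1
      convert! h3 using 1
      push_cast; ring
    exact h1.clog_real (Or.inl (re_pos_aux hz1 (le_of_lt ht)))
  · have h1 : Tendsto (fun t : ℝ => (1 - z * (Real.exp (-t) : ℂ))) atTop (𝓝 (1 - z * ((0:ℝ) : ℂ))) := by
      refine Tendsto.const_sub _ (Tendsto.const_mul _ ?_)
      exact (Complex.continuous_ofReal.tendsto 0).comp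
        (Real.tendsto_exp_atBot.comp tendsto_neg_atTop_atBot)
    have h2 := h1.clog (by simp)
    simpa using h2

lemma expZeta_mellin {x : ℝ} (hx0 : 0 < x) (hx1 : x < 1) {s : ℂ} (hs : 1 < s.re) :
    Gamma s * expZeta x s = mellin (FF (cexp (2 * Real.pi * I * x))) s := by
  set z := cexp (2 * Real.pi * I * x) with hzdef
  have hz : ‖z‖ = 1 := norm_z x
  have h1 := hasSum_expZeta_of_one_lt_re x hs
  have h2 := hasSum_mellin (a := fun n : ℕ => if n = 0 then 0 else z ^ n) (p := fun n : ℕ => (n:ℝ))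
    (F := FF z) (s := s) ?_ (by linarith) ?_ ?_
  · refine HasSum.unique ((h1.mul_left (Gamma s))) ?_
    convert! h2 using 1
    funext n
    by_cases hn : n = 0
    · subst hn
      simp
      right
      intro h; rw [h] at hs; simp at hs; exact absurd hs (by norm_num)
    · simp only [hn, if_false]
      rw [hzdef, ← Complex.exp_nat_mul]
      push_cast
      rw [mul_div_assoc]
      congr 3
      ring
  · intro n
    by_cases hn : n = 0
    · left; simp [hn]
    · right; exact_mod_cast Nat.pos_of_ne_zero hn
  · intro t ht
    have hlt : ‖z * (Real.exp (-t) : ℂ)‖ < 1 := by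
      rw [norm_mul, hz, one_mul, Complex.norm_of_nonneg (Real.exp_pos _).le, Real.exp_lt_one_iff]
      simpa using ht
    have hg := (hasSum_geometric_of_norm_lt_one hlt).mul_left (z * (Real.exp (-t) : ℂ))
    have : HasSum (fun n : ℕ => (if n + 1 = 0 then 0 else z ^ (n+1)) * (Real.exp (-((n+1 : ℕ):ℝ) * t) : ℂ)) (FF z t) := by
      convert! hg using 1
      · funext n
        simp only [Nat.add_eq_zero_iff, one_ne_zero, and_false, if_false]
        rw [mul_pow, ← Complex.ofReal_pow, ← Real.exp_nat_mul, pow_succ]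
        have e1 : Real.exp (-((n+1 : ℕ):ℝ) * t) = Real.exp (-t) * Real.exp (n * -t) := by
          rw [← Real.exp_add]; congr 1; push_cast; ring
        rw [e1]; push_cast; ring
    have h3 := (hasSum_nat_add_iff (f := fun n : ℕ => (if n = 0 then 0 else z ^ n) * (Real.exp (-(n:ℝ) * t) : ℂ)) 1).mp this
    simpa using h3
  · have : Summable fun n : ℕ => 1 / (n:ℝ) ^ s.re := Real.summable_one_div_nat_rpow.mpr hs
    refine this.of_nonneg_of_le (fun n => by positivity) (fun n => ?_)
    gcongr
    split_ifs
    · simp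
    · rw [norm_pow, hz, one_pow]

lemma expZeta_one {x : ℝ} (hx0 : 0 < x) (hx1 : x < 1) :
    expZeta x 1 = - log (1 - cexp (2 * Real.pi * I * x)) := by
  set z := cexp (2 * Real.pi * I * x) with hzdef
  have hz : ‖z‖ = 1 := norm_z x
  have hz1 : z.re < 1 := z_re_lt x hx0 hx1
  have hxne : (x : UnitAddCircle) ≠ 0 := by
    intro h
    rw [AddCircle.coe_eq_zero_iff] at h
    obtain ⟨n, hn⟩ := h
    simp at hn
    rw [← hn] at hx0 hx1
    have h1 : 0 < n := by exact_mod_cast hx0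
    have h2 : n < 1 := by exact_mod_cast hx1
    omega
  have hd : DifferentiableAt ℂ (mellin (FF z)) 1 := by
    refine mellin_differentiableAt_of_isBigO_rpow_exp (a := 1) (b := 0) one_pos ?_ ?_ ?_ (by simp)
    · exact ((FF_cont hz1).mono Ioi_subset_Ici_self).locallyIntegrableOn measurableSet_Ioi
    · refine Asymptotics.IsBigO.of_bound (min 1 (1 - z.re))⁻¹ ?_
      filter_upwards [eventually_ge_atTop 0] with t ht
      simpa [abs_of_pos] using FF_bound hz hz1 ht
    · refine Asymptotics.IsBigO.of_bound (min 1 (1 - z.re))⁻¹ ?_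
      filter_upwards [self_mem_nhdsWithin] with t ht
      have hc : 0 < min 1 (1 - z.re) := lt_min one_pos (by linarith)
      have ht' : (0:ℝ) < t := ht
      refine (FF_bound hz hz1 ht'.le).trans ?_
      simp only [neg_zero, Real.rpow_zero, norm_one, mul_one]
      have : Real.exp (-t) ≤ 1 := by rw [Real.exp_le_one_iff]; linarith
      exact mul_le_of_le_one_right (by positivity) this
  have hval : mellin (FF z) 1 = - log (1 - z) := by
    rw [← FF_integral hz hz1, mellin]
    refine setIntegral_congr_fun measurableSet_Ioi fun t ht => ?_
    simp
  rw [← hval]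
  have hto : Tendsto (fun t : ℝ => (t : ℂ)) (𝓝[>] 1) (𝓝 1) := by
    refine Tendsto.mono_left ?_ nhdsWithin_le_nhds
    have := Complex.continuous_ofReal.tendsto (1:ℝ)
    simpa using this
  have t1 : Tendsto (fun t : ℝ => Gamma t * expZeta x t) (𝓝[>] 1) (𝓝 (Gamma 1 * expZeta x 1)) := by
    have hg : ContinuousAt Gamma 1 := by
      refine (Complex.differentiableAt_Gamma 1 ?_).continuousAt
      intro m h
      have := congrArg Complex.re h
      simp at this
      have h2 : (0:ℝ) ≤ m := Nat.cast_nonneg m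
      linarith
    exact ((hg.mul (differentiable_expZeta_of_ne_zero hxne 1).continuousAt).tendsto).comp hto
  have t2 : Tendsto (fun t : ℝ => mellin (FF z) t) (𝓝[>] 1) (𝓝 (mellin (FF z) 1)) :=
    hd.continuousAt.tendsto.comp hto
  have heq : (fun t : ℝ => Gamma t * expZeta x t) =ᶠ[𝓝[>] 1] (fun t : ℝ => mellin (FF z) t) := by
    filter_upwards [self_mem_nhdsWithin] with t ht
    exact expZeta_mellin hx0 hx1 (by simpa using ht)
  have := tendsto_nhds_unique (t1.congr' heq) t2
  simpa using this

lemma expZeta_one_im {x : ℝ} (hx0 : 0 < x) (hx1 : x < 1) :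
    (expZeta x 1).im = Real.pi * (1/2 - x) := by
  rw [expZeta_one hx0 hx1, Complex.neg_im, Complex.log_im]
  have hpi := Real.pi_pos
  have hs : 0 < Real.sin (Real.pi * x) := Real.sin_pos_of_pos_of_lt_pi (by positivity) (by nlinarith)
  have : 1 - cexp (2 * Real.pi * I * x) = ((2 * Real.sin (Real.pi * x) : ℝ) : ℂ) *
      (Complex.cos ((Real.pi * x - Real.pi / 2 : ℝ) : ℂ) + Complex.sin ((Real.pi * x - Real.pi / 2 : ℝ) : ℂ) * I) := by
    rw [show (2 * Real.pi * I * x : ℂ) = ((2 * (Real.pi * x) : ℝ) : ℂ) * I by push_cast; ring,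
      Complex.exp_mul_I, ← Complex.ofReal_cos, ← Complex.ofReal_sin, ← Complex.ofReal_cos, ← Complex.ofReal_sin,
      Real.cos_sub_pi_div_two, Real.sin_sub_pi_div_two, Real.cos_two_mul, Real.sin_two_mul]
    have := congrArg (fun y : ℝ => (y : ℂ)) (Real.sin_sq_add_cos_sq (Real.pi * x))
    push_cast at this ⊢
    linear_combination (-2) * this
  rw [this, Complex.arg_mul_cos_add_sin_mul_I (by positivity)]
  · ring
  · constructor <;> nlinarith
end IdxTwo

namespace IdxTwo
open HurwitzZeta

lemma sinZeta_one_eq {x : ℝ} (hx0 : 0 < x) (hx1 : x < 1) :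
    sinZeta x 1 = ((Real.pi * (1/2 - x) : ℝ) : ℂ) := by
  have hneg : -(x : UnitAddCircle) = ((1 - x : ℝ) : UnitAddCircle) := by
    rw [AddCircle.coe_sub, AddCircle.coe_period, zero_sub]
  have hre : (expZeta x 1).re = (expZeta (-(x : UnitAddCircle)) 1).re := by
    rw [hneg, expZeta_one hx0 hx1, expZeta_one (by linarith) (by linarith), neg_re, neg_re,
      log_re, log_re]
    congr 2
    rw [← Complex.norm_conj]
    congr 1
    rw [map_sub, map_one, ← Complex.exp_conj]
    congr 1
    rw [Complex.exp_eq_exp_iff_exists_int]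
    refine ⟨-1, ?_⟩
    have h2 : (starRingEnd ℂ) 2 = 2 := Complex.conj_ofNat 2
    simp [Complex.conj_ofReal, h2]
    ring
  have him : (expZeta (-(x : UnitAddCircle)) 1).im = Real.pi * (x - 1/2) := by
    rw [hneg, expZeta_one_im (by linarith) (by linarith)]; ring
  rw [sinZeta_eq]
  have h2 : expZeta x 1 - expZeta (-(x : UnitAddCircle)) 1 = 2 * I * ((Real.pi * (1/2 - x) : ℝ) : ℂ) := by
    apply Complex.ext
    · rw [sub_re, hre]; simp
    · rw [sub_im, him, expZeta_one_im hx0 hx1]; simp; ring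
  rw [h2]
  field_simp

/-- quadratic Dirichlet character mod l -/
noncomputable def qc (l : ℕ) [Fact l.Prime] : DirichletCharacter ℂ l :=
  (quadraticChar (ZMod l)).ringHomComp (Int.castRingHom ℂ)

lemma qc_apply (l : ℕ) [Fact l.Prime] (a : ZMod l) : qc l a = (quadraticChar (ZMod l) a : ℤ) := rfl

lemma qc_quad (l : ℕ) [Fact l.Prime] : (qc l).IsQuadratic := by
  intro a
  rw [qc_apply]
  rcases quadraticChar_isQuadratic (ZMod l) a with h | h | h <;> rw [h] <;> simp

lemma qc_ne_one (l : ℕ) [Fact l.Prime] (hl2 : l ≠ 2) : qc l ≠ 1 := by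
  unfold qc
  rw [MulChar.ringHomComp_ne_one_iff (RingHom.injective_int _)]
  exact quadraticChar_ne_one (by rw [ZMod.ringChar_zmod_n]; exact hl2)

lemma qc_prim (l : ℕ) [Fact l.Prime] (hl2 : l ≠ 2) : (qc l).IsPrimitive := by
  rw [DirichletCharacter.isPrimitive_def]
  rcases (Nat.dvd_prime (Fact.out : l.Prime)).mp (DirichletCharacter.conductor_dvd_level (qc l)) with h | h
  · exact absurd (DirichletCharacter.eq_one_iff_conductor_eq_one.mpr h) (qc_ne_one l hl2)
  · exact h

lemma qchar_neg_one (l : ℕ) [Fact l.Prime] (hl4 : l % 4 = 3) : quadraticChar (ZMod l) (-1) = -1 := by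
  rw [quadraticChar_neg_one (by rw [ZMod.ringChar_zmod_n]; omega), ZMod.card,
    ZMod.χ₄_nat_three_mod_four hl4]

lemma qc_odd (l : ℕ) [Fact l.Prime] (hl4 : l % 4 = 3) (a : ZMod l) : qc l (-a) = - qc l a := by
  rw [neg_eq_neg_one_mul, map_mul, qc_apply l (-1), qchar_neg_one l hl4]
  simp

lemma norm_gauss_qc (l : ℕ) [Fact l.Prime] (hl4 : l % 4 = 3) :
    ‖gaussSum (qc l) ZMod.stdAddChar‖ = Real.sqrt l := by
  have h := gaussSum_sq (qc_ne_one l (by omega)) (qc_quad l) (ZMod.isPrimitive_stdAddChar l)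
  have h2 := congrArg norm h
  rw [norm_pow, qc_apply, qchar_neg_one l hl4, ZMod.card] at h2
  simp at h2
  rw [← h2, Real.sqrt_sq (norm_nonneg _)]

lemma L_one (l : ℕ) [Fact l.Prime] (hl4 : l % 4 = 3) :
    ‖DirichletCharacter.LFunction (qc l) 1‖ * Real.sqrt l =
      Real.pi / l * |((∑ a : ZMod l, (a.val : ℤ) * quadraticChar (ZMod l) a : ℤ) : ℝ)| := by
  have hl0 : (l : ℂ) ≠ 0 := by exact_mod_cast (Fact.out : l.Prime).ne_zero
  have hl0' : (0:ℝ) < l := by exact_mod_cast (Fact.out : l.Prime).pos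
  have h0 : qc l 0 = 0 := by rw [qc_apply]; simp
  have hdft := ZMod.LFunction_dft (qc l) (s := 1) (Or.inl h0)
  have hL : ZMod.LFunction (ZMod.dft (qc l)) 1 =
      - gaussSum (qc l) ZMod.stdAddChar * DirichletCharacter.LFunction (qc l) 1 := by
    unfold DirichletCharacter.LFunction ZMod.LFunction
    rw [mul_left_comm]
    congr 1
    rw [Finset.mul_sum]
    refine Finset.sum_congr rfl fun j _ => ?_
    rw [(qc_prim l (by omega)).fourierTransform_eq_inv_mul_gaussSum, (qc_quad l).inv, qc_odd l hl4]
    ring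
  have hsum0 : ∑ a : ZMod l, qc l a = 0 := MulChar.sum_eq_zero_of_ne_one (qc_ne_one l (by omega))
  have hcos : ∑ j : ZMod l, qc l j * cosZeta (ZMod.toAddCircle j) 1 = 0 := by
    have h1 : ∑ j : ZMod l, qc l j * cosZeta (ZMod.toAddCircle j) 1 =
        - ∑ j : ZMod l, qc l j * cosZeta (ZMod.toAddCircle j) 1 := by
      conv_lhs => rw [← Equiv.sum_comp (Equiv.neg (ZMod l))]
      rw [← Finset.sum_neg_distrib]
      refine Finset.sum_congr rfl fun j _ => ?_
      rw [Equiv.neg_apply, map_neg (ZMod.toAddCircle (N := l)), cosZeta_neg, qc_odd l hl4]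
      ring
    exact self_eq_neg.mp h1
  have hsin : ∑ j : ZMod l, qc l j * sinZeta (ZMod.toAddCircle j) 1 =
      - (Real.pi / l : ℂ) * ((∑ a : ZMod l, (a.val : ℤ) * quadraticChar (ZMod l) a : ℤ) : ℂ) := by
    have h1 : ∀ j : ZMod l, qc l j * sinZeta (ZMod.toAddCircle j) 1 =
        (Real.pi / 2 : ℂ) * qc l j - (Real.pi / l : ℂ) * ((j.val : ℂ) * qc l j) := by
      intro j
      by_cases hj : j = 0
      · subst hj; rw [h0]; simp
      · rw [ZMod.toAddCircle_apply, sinZeta_one_eq]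
        · push_cast; ring
        · have : 0 < j.val := Nat.pos_of_ne_zero (by rwa [Ne, ZMod.val_eq_zero])
          have : (0:ℝ) < j.val := by exact_mod_cast this
          positivity
        · rw [div_lt_one hl0']; exact_mod_cast ZMod.val_lt j
    rw [Finset.sum_congr rfl fun j _ => h1 j, Finset.sum_sub_distrib, ← Finset.mul_sum, hsum0,
      ← Finset.mul_sum]
    push_cast
    simp [qc_apply]
  have hS : ∑ j : ZMod l, qc l j * expZeta (ZMod.toAddCircle (-j)) 1 =
      I * (Real.pi / l : ℂ) * ((∑ a : ZMod l, (a.val : ℤ) * quadraticChar (ZMod l) a : ℤ) : ℂ) := by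
    have h1 : ∀ j : ZMod l, qc l j * expZeta (ZMod.toAddCircle (-j)) 1 =
      qc l j * cosZeta (ZMod.toAddCircle j) 1 - I * (qc l j * sinZeta (ZMod.toAddCircle j) 1) := by
      intro j
      rw [expZeta, map_neg (ZMod.toAddCircle (N := l)), cosZeta_neg, sinZeta_neg]; ring
    rw [Finset.sum_congr rfl fun j _ => h1 j, Finset.sum_sub_distrib, ← Finset.mul_sum, hcos, hsin]
    ring
  rw [hL, hS] at hdft
  have h3 := congrArg norm hdft
  rw [norm_mul, norm_neg, norm_gauss_qc l hl4, norm_mul, norm_mul, norm_I, one_mul] at h3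
  rw [mul_comm, h3]
  congr 1
  · rw [norm_div, Complex.norm_of_nonneg Real.pi_pos.le, Complex.norm_natCast]
  · rw [Complex.norm_intCast]
end IdxTwo

namespace IdxTwo

section ideals
set_option linter.unusedSectionVars false
variable {R : Type*} [CommRing R] [IsDedekindDomain R] [Module.Free ℤ R] [Module.Finite ℤ R]

lemma sup_mul_sup_eq {m n : ℕ} (hmn : m.Coprime n) (K : Ideal R) (hK : ((m * n : ℕ) : R) ∈ K) :
    (K ⊔ Ideal.span {(m : R)}) * (K ⊔ Ideal.span {(n : R)}) = K := by
  obtain ⟨u, v, huv⟩ := Nat.isCoprime_iff_coprime.mpr hmn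
  apply le_antisymm
  · rw [Ideal.sup_mul, Ideal.mul_sup, Ideal.mul_sup]
    refine sup_le (sup_le Ideal.mul_le_left Ideal.mul_le_left) (sup_le Ideal.mul_le_right ?_)
    rw [Ideal.span_singleton_mul_span_singleton, Ideal.span_singleton_le_iff_mem]
    exact_mod_cast hK
  · intro x hx
    have : x = (m : R) * ((u : R) * x) + ((v : R) * x) * (n : R) := by
      have h : (u : R) * m + v * n = 1 := by exact_mod_cast congrArg (Int.cast : ℤ → R) huv
      linear_combination (-x) * h
    rw [this]
    refine Ideal.add_mem _ (Ideal.mul_mem_mul ?_ ?_) (Ideal.mul_mem_mul ?_ ?_)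
    · exact Ideal.mem_sup_right (Ideal.mem_span_singleton_self _)
    · exact Ideal.mem_sup_left (K.mul_mem_left _ hx)
    · exact Ideal.mem_sup_left (K.mul_mem_left _ hx)
    · exact Ideal.mem_sup_right (Ideal.mem_span_singleton_self _)

lemma sup_span_eq {m n : ℕ} (hmn : m.Coprime n) (I J : Ideal R) (hI : (m : R) ∈ I) (hJ : (n : R) ∈ J) :
    I * J ⊔ Ideal.span {(m : R)} = I := by
  obtain ⟨u, v, huv⟩ := Nat.isCoprime_iff_coprime.mpr hmn
  apply le_antisymm
  · exact sup_le Ideal.mul_le_left (by rwa [Ideal.span_singleton_le_iff_mem])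
  · intro x hx
    have : x = x * ((v : R) * n) + (u * x) * (m : R) := by
      have h : (u : R) * m + v * n = 1 := by exact_mod_cast congrArg (Int.cast : ℤ → R) huv
      linear_combination (-x) * h
    rw [this]
    refine Ideal.add_mem _ (Ideal.mem_sup_left (Ideal.mul_mem_mul hx (J.mul_mem_left _ hJ))) 
      (Ideal.mem_sup_right (Ideal.mul_mem_left _ _ (Ideal.mem_span_singleton_self _)))

lemma absNorm_coprime {m n : ℕ} (hmn : m.Coprime n) (I : Ideal R) (hI : (m : R) ∈ I) :
    (Ideal.absNorm I).Coprime n := by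
  have h : Ideal.absNorm I ∣ m ^ Module.finrank ℤ R := by
    rw [← Ideal.absNorm_span_natCast]
    exact Ideal.absNorm_dvd_absNorm_of_le (by rwa [Ideal.span_singleton_le_iff_mem])
  exact Nat.Coprime.coprime_dvd_left h (Nat.Coprime.pow_left _ hmn)

lemma card_norm_mul {m n : ℕ} (hmn : m.Coprime n) :
    Nat.card {I : Ideal R // Ideal.absNorm I = m * n} =
      Nat.card {I : Ideal R // Ideal.absNorm I = m} * Nat.card {I : Ideal R // Ideal.absNorm I = n} := by
  rw [← Nat.card_prod]
  symm
  apply Nat.card_congr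
  refine Equiv.ofBijective
    (fun x : {I : Ideal R // Ideal.absNorm I = m} × {I : Ideal R // Ideal.absNorm I = n} =>
      (⟨x.1.1 * x.2.1, by rw [map_mul, x.1.2, x.2.2]⟩ : {I : Ideal R // Ideal.absNorm I = m * n})) ⟨?_, ?_⟩
  · rintro ⟨⟨I, hI⟩, ⟨J, hJ⟩⟩ ⟨⟨I', hI'⟩, ⟨J', hJ'⟩⟩ h
    simp only [Subtype.mk.injEq] at h
    have mI : (m : R) ∈ I := hI ▸ Ideal.absNorm_mem I
    have mI' : (m : R) ∈ I' := hI' ▸ Ideal.absNorm_mem I'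
    have mJ : (n : R) ∈ J := hJ ▸ Ideal.absNorm_mem J
    have mJ' : (n : R) ∈ J' := hJ' ▸ Ideal.absNorm_mem J'
    have e1 : I = I' := by
      rw [← sup_span_eq hmn I J mI mJ, h, sup_span_eq hmn I' J' mI' mJ']
    have e2 : J = J' := by
      rw [← sup_span_eq hmn.symm J I mJ mI, mul_comm J I, h, mul_comm, sup_span_eq hmn.symm J' I' mJ' mI']
    subst e1 e2; rfl
  · rintro ⟨K, hK⟩
    have hK' : ((m * n : ℕ) : R) ∈ K := hK ▸ Ideal.absNorm_mem K
    have hmul := sup_mul_sup_eq hmn K hK'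
    set I := K ⊔ Ideal.span {(m : R)}
    set J := K ⊔ Ideal.span {(n : R)}
    have mI : (m : R) ∈ I := Ideal.mem_sup_right (Ideal.mem_span_singleton_self _)
    have mJ : (n : R) ∈ J := Ideal.mem_sup_right (Ideal.mem_span_singleton_self _)
    have c1 := absNorm_coprime hmn I mI
    have c2 := absNorm_coprime hmn.symm J mJ
    have hprod : Ideal.absNorm I * Ideal.absNorm J = m * n := by rw [← map_mul, hmul, hK]
    have e1 : Ideal.absNorm I = m := Nat.dvd_antisymm
      (c1.dvd_of_dvd_mul_right (hprod ▸ Dvd.intro _ rfl))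
      (c2.symm.dvd_of_dvd_mul_right (hprod ▸ Dvd.intro _ rfl))
    have e2 : Ideal.absNorm J = n := Nat.dvd_antisymm
      (c2.dvd_of_dvd_mul_left (hprod ▸ Dvd.intro_left _ rfl))
      (c1.symm.dvd_of_dvd_mul_left (hprod ▸ Dvd.intro_left _ rfl))
    exact ⟨⟨⟨I, e1⟩, ⟨J, e2⟩⟩, Subtype.ext hmul⟩

/-- one step of factoring an ideal of prime power norm -/
lemma exists_factor {q : ℕ} (hq : q.Prime) {k : ℕ} (I : Ideal R) (hI : Ideal.absNorm I = q ^ (k+1)) :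
    ∃ M J : Ideal R, M.IsMaximal ∧ (q : R) ∈ M ∧ I = M * J := by
  have hne : I ≠ ⊤ := by
    intro h; rw [h, Ideal.absNorm_top] at hI
    exact absurd hI.symm (Nat.one_lt_pow (by omega) hq.one_lt).ne'
  obtain ⟨M, hM, hIM⟩ := Ideal.exists_le_maximal I hne
  obtain ⟨J, hJ⟩ := Ideal.dvd_iff_le.mpr hIM
  refine ⟨M, J, hM, ?_, hJ⟩
  have h1 : ((q : R)) ^ (k+1) ∈ M := by
    have := hIM (Ideal.absNorm_mem I)
    rw [hI] at this; exact_mod_cast this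
  exact hM.isPrime.mem_of_pow_mem _ h1

lemma card_ramified {q : ℕ} (hq : q.Prime) (P : Ideal R) (hP : P.IsPrime) (hPn : Ideal.absNorm P = q)
    (h : P ^ 2 = Ideal.span {(q : R)}) (k : ℕ) :
    Nat.card {I : Ideal R // Ideal.absNorm I = q ^ k} = 1 := by
  have key : ∀ k (I : Ideal R), Ideal.absNorm I = q ^ k → I = P ^ k := by
    intro k
    induction k with
    | zero => intro I hI; rw [pow_zero, Ideal.absNorm_eq_one_iff] at hI; rw [hI, pow_zero, Ideal.one_eq_top]
    | succ k ih =>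
      intro I hI
      obtain ⟨M, J, hM, hqM, hMJ⟩ := exists_factor hq I hI
      have hPM : P ≤ M := by
        apply hM.isPrime.le_of_pow_le (n := 2)
        rw [h, Ideal.span_singleton_le_iff_mem]; exact hqM
      have hPmax : P.IsMaximal := hP.isMaximal (by
        rintro rfl; rw [Ideal.absNorm_bot] at hPn; exact hq.ne_zero hPn.symm)
      have hPM' : P = M := hPmax.eq_of_le hM.ne_top hPM
      subst hPM'
      rw [hMJ, map_mul, hPn, pow_succ'] at hI
      rw [hMJ, ih J (Nat.eq_of_mul_eq_mul_left hq.pos hI), pow_succ']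
  rw [Nat.card_eq_one_iff_exists]
  exact ⟨⟨P ^ k, by rw [map_pow, hPn]⟩, fun y => Subtype.ext (key k y.1 y.2)⟩

lemma card_inert {q : ℕ} (hq : q.Prime) (hP : (Ideal.span {(q : R)}).IsPrime)
    (hPn : Ideal.absNorm (Ideal.span {(q : R)}) = q ^ 2) (k : ℕ) :
    Nat.card {I : Ideal R // Ideal.absNorm I = q ^ k} = if Even k then 1 else 0 := by
  set P := Ideal.span {(q : R)} with hPdef
  have step : ∀ k (I : Ideal R), Ideal.absNorm I = q ^ (k+1) → ∃ J, I = P * J ∧ q^2 * Ideal.absNorm J = q ^ (k+1) := by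
    intro k I hI
    obtain ⟨M, J, hM, hqM, hMJ⟩ := exists_factor hq I hI
    have hPM : P ≤ M := by
      rw [hPdef, Ideal.span_singleton_le_iff_mem]; exact hqM
    have hPmax : P.IsMaximal := hP.isMaximal (by
      intro hb; rw [hb, Ideal.absNorm_bot] at hPn; exact (pow_ne_zero 2 hq.ne_zero) hPn.symm)
    have hPM' : P = M := hPmax.eq_of_le hM.ne_top hPM
    refine ⟨J, by rw [hMJ, hPM'], ?_⟩
    rw [← hPn, ← map_mul, hPM', ← hMJ, hI]
  have key : ∀ k, (∀ I : Ideal R, Ideal.absNorm I = q ^ (2*k) → I = P ^ k) ∧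
      (∀ I : Ideal R, Ideal.absNorm I ≠ q ^ (2*k+1)) := by
    intro k
    induction k with
    | zero => 
      refine ⟨?_, ?_⟩
      · intro I hI; simp only [mul_zero, pow_zero, Ideal.absNorm_eq_one_iff] at hI; rw [hI, pow_zero, Ideal.one_eq_top]
      · intro I hI
        obtain ⟨J, hJ, hn⟩ := step 0 I hI
        have : q ^ 2 ∣ q ^ 1 := ⟨_, hn.symm⟩
        have := Nat.pow_dvd_pow_iff_le_right hq.one_lt |>.mp this
        omega
    | succ k ih =>
      refine ⟨?_, ?_⟩
      · intro I hI
        obtain ⟨J, hJ, hn⟩ := step (2*k+1) I hI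
        rw [hJ, ih.1 J (Nat.eq_of_mul_eq_mul_left (pow_pos hq.pos 2) (by rw [hn]; ring)), pow_succ']
      · intro I hI
        obtain ⟨J, hJ, hn⟩ := step (2*k+2) I hI
        exact ih.2 J (Nat.eq_of_mul_eq_mul_left (pow_pos hq.pos 2) (by rw [hn]; ring))
  split_ifs with hk
  · obtain ⟨j, rfl⟩ := hk
    rw [← two_mul, Nat.card_eq_one_iff_exists]
    exact ⟨⟨P ^ j, by rw [map_pow, hPn, pow_mul]⟩, fun y => Subtype.ext ((key j).1 y.1 y.2)⟩
  · rw [Nat.not_even_iff_odd] at hk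
    obtain ⟨j, rfl⟩ := hk
    rw [Nat.card_eq_zero]
    exact Or.inl ⟨fun y => (key j).2 y.1 y.2⟩

lemma card_split {q : ℕ} (hq : q.Prime) (P Q : Ideal R) (hP : P.IsPrime) (hQ : Q.IsPrime) (hPQ : P ≠ Q)
    (hPn : Ideal.absNorm P = q) (hQn : Ideal.absNorm Q = q)
    (h : P * Q = Ideal.span {(q : R)}) (k : ℕ) :
    Nat.card {I : Ideal R // Ideal.absNorm I = q ^ k} = k + 1 := by
  have hP0 : P ≠ ⊥ := by rintro rfl; rw [Ideal.absNorm_bot] at hPn; exact hq.ne_zero hPn.symm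
  have hQ0 : Q ≠ ⊥ := by rintro rfl; rw [Ideal.absNorm_bot] at hQn; exact hq.ne_zero hQn.symm
  have hPmax : P.IsMaximal := hP.isMaximal hP0
  have hQmax : Q.IsMaximal := hQ.isMaximal hQ0
  have key : ∀ k (I : Ideal R), Ideal.absNorm I = q ^ k → ∃ i ≤ k, I = P ^ i * Q ^ (k - i) := by
    intro k
    induction k with
    | zero => 
      intro I hI; rw [pow_zero, Ideal.absNorm_eq_one_iff] at hI
      exact ⟨0, le_rfl, by rw [hI, Nat.sub_self, pow_zero, pow_zero, one_mul, Ideal.one_eq_top]⟩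
    | succ k ih =>
      intro I hI
      obtain ⟨M, J, hM, hqM, hMJ⟩ := exists_factor hq I hI
      have hM' : P ≤ M ∨ Q ≤ M := by
        apply (hM.isPrime.mul_le).mp
        rw [h, Ideal.span_singleton_le_iff_mem]; exact hqM
      rcases hM' with hM' | hM'
      · have e := hPmax.eq_of_le hM.ne_top hM'
        subst e
        rw [hMJ, map_mul, hPn, pow_succ'] at hI
        obtain ⟨i, hi, e⟩ := ih J (Nat.eq_of_mul_eq_mul_left hq.pos hI)
        refine ⟨i+1, by omega, ?_⟩
        rw [hMJ, e, pow_succ', mul_assoc, Nat.add_sub_add_right]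
      · have e := hQmax.eq_of_le hM.ne_top hM'
        subst e
        rw [hMJ, map_mul, hQn, pow_succ'] at hI
        obtain ⟨i, hi, e⟩ := ih J (Nat.eq_of_mul_eq_mul_left hq.pos hI)
        refine ⟨i, by omega, ?_⟩
        rw [hMJ, e, Nat.succ_sub hi, pow_succ' Q]; ring
  have hPpr : Prime P := Ideal.prime_of_isPrime hP0 hP
  have hndvd : ∀ j, ¬ P ∣ Q ^ j := by
    intro j hj
    have := hPpr.dvd_of_dvd_pow hj
    exact hPQ (hQmax.eq_of_le hP.ne_top (Ideal.dvd_iff_le.mp this)).symm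
  have hinj : ∀ i j a b : ℕ, P ^ i * Q ^ a = P ^ j * Q ^ b → i ≤ j := by
    intro i j a b e
    by_contra hlt
    push Not at hlt
    have : P ^ (j+1) ∣ P ^ j * Q ^ b := by
      rw [← e]; exact (pow_dvd_pow P hlt).mul_right _
    rw [pow_succ] at this
    exact hndvd b ((mul_dvd_mul_iff_left (pow_ne_zero j hPpr.ne_zero)).mp this)
  have : Nat.card (Fin (k+1)) = k + 1 := by simp
  rw [← this]
  symm
  apply Nat.card_congr
  refine Equiv.ofBijective (fun i : Fin (k+1) => (⟨P ^ (i:ℕ) * Q ^ (k - i), by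
    rw [map_mul, map_pow, map_pow, hPn, hQn, ← pow_add]; congr 1; omega⟩ :
      {I : Ideal R // Ideal.absNorm I = q ^ k})) ⟨?_, ?_⟩
  · intro i j e
    simp only [Subtype.mk.injEq] at e
    exact Fin.ext (le_antisymm (hinj _ _ _ _ e) (hinj _ _ _ _ e.symm))
  · rintro ⟨I, hI⟩
    obtain ⟨i, hi, e⟩ := key k I hI
    exact ⟨⟨i, by omega⟩, Subtype.ext e.symm⟩
end ideals
end IdxTwo

namespace IdxTwo

structure QR (R : Type*) [CommRing R] (w : R) (m : ℤ) : Prop where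
  sq : w * w = w - m
  gen : ∀ x : R, ∃ a b : ℤ, x = a + b * w
  ind : ∀ a b : ℤ, (a : R) + b * w = 0 → a = 0 ∧ b = 0
  fr : Module.finrank ℤ R = 2

section qr
set_option linter.unusedSectionVars false
variable {R : Type*} [CommRing R] [IsDedekindDomain R] [Module.Free ℤ R] [Module.Finite ℤ R]
  {w : R} {m : ℤ}

lemma nat_sq_aux {q a b : ℕ} (hq : q.Prime) (h : a * b = q ^ 2) (ha : a ≠ 1) (hb : b ≠ 1) : a = q ∧ b = q := by
  have h1 : a ∣ q ^ 2 := ⟨b, h.symm⟩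
  obtain ⟨i, hi, rfl⟩ := (Nat.dvd_prime_pow hq).mp h1
  have h2 : b ∣ q ^ 2 := ⟨_, by rw [← h, mul_comm]⟩
  obtain ⟨j, hj, rfl⟩ := (Nat.dvd_prime_pow hq).mp h2
  have : i ≠ 0 := by rintro rfl; simp at ha
  have : j ≠ 0 := by rintro rfl; simp at hb
  rw [← pow_add] at h
  have := Nat.pow_right_injective hq.two_le h
  have h1 : i = 1 := by omega
  have h2 : j = 1 := by omega
  subst h1 h2; simp

lemma QR.ne_top (H : QR R w m) {q : ℕ} (hq : q.Prime) {t : ℤ} (ht : (q : ℤ) ∣ t ^ 2 - t + m) :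
    Ideal.span {(q : R), w - t} ≠ ⊤ := by
  intro h
  have h1 : (1 : R) ∈ Ideal.span {(q : R), w - t} := by rw [h]; trivial
  rw [Ideal.mem_span_pair] at h1
  obtain ⟨x, y, hxy⟩ := h1
  obtain ⟨c, hc⟩ := ht
  have hc' : (t : R) ^ 2 - t + m = q * c := by exact_mod_cast congrArg (Int.cast : ℤ → R) hc
  obtain ⟨a, b, hab⟩ := H.gen (x * (w - 1 + t) - y * c)
  have h2 : w - 1 + t = q * (a + b * w) := by
    rw [← hab]
    linear_combination (-(w - 1 + t)) * hxy + y * H.sq + (-y) * hc'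
  have h3 := H.ind (t - 1 - q * a) (1 - q * b) (by push_cast; linear_combination h2)
  have h4 : (q : ℤ) ∣ 1 := ⟨b, by linarith [h3.2]⟩
  exact hq.one_lt.ne' (by exact_mod_cast Int.eq_one_of_dvd_one (by positivity) h4)

lemma QR.norm_q (H : QR R w m) (q : ℕ) : Ideal.absNorm (Ideal.span {(q : R)}) = q ^ 2 := by
  rw [Ideal.absNorm_span_natCast, H.fr]

lemma QR.card_split (H : QR R w m) {q : ℕ} (hq : q.Prime) {t : ℤ} (ht : (q : ℤ) ∣ t ^ 2 - t + m)
    (h2 : ¬ (q : ℤ) ∣ 2 * t - 1) (k : ℕ) :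
    Nat.card {I : Ideal R // Ideal.absNorm I = q ^ k} = k + 1 := by
  have ht' : (q : ℤ) ∣ (1 - t) ^ 2 - (1 - t) + m := by convert ht using 1; ring
  have n1 := H.ne_top hq ht
  have n2 := H.ne_top hq ht'
  set P := Ideal.span {(q : R), w - t} with hP
  set Q := Ideal.span {(q : R), w - ((1 - t : ℤ) : R)} with hQ
  obtain ⟨u, v, huv⟩ : IsCoprime (q : ℤ) (2 * t - 1) := 
    (Prime.coprime_iff_not_dvd (Nat.prime_iff_prime_int.mp hq)).mpr h2
  have huv' : (u : R) * q + v * (2 * t - 1) = 1 := by exact_mod_cast congrArg (Int.cast : ℤ → R) huv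
  obtain ⟨c, hc⟩ := ht
  have hc' : (t : R) ^ 2 - t + m = q * c := by exact_mod_cast congrArg (Int.cast : ℤ → R) hc
  have qP : (q : R) ∈ P := Ideal.subset_span (by simp)
  have qQ : (q : R) ∈ Q := Ideal.subset_span (by simp)
  have wP : w - t ∈ P := Ideal.subset_span (by simp)
  have wQ : w - ((1 - t : ℤ) : R) ∈ Q := Ideal.subset_span (by simp)
  have hmul : P * Q = Ideal.span {(q : R)} := by
    apply le_antisymm
    · rw [hP, hQ, Ideal.span_pair_mul_span_pair, Ideal.span_le]
      intro x hx
      simp only [Set.mem_insert_iff, Set.mem_singleton_iff] at hx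
      rw [SetLike.mem_coe, Ideal.mem_span_singleton]
      rcases hx with rfl | rfl | rfl | rfl
      · exact Dvd.intro _ rfl
      · exact Dvd.intro _ rfl
      · exact Dvd.intro_left _ rfl
      · refine ⟨-c, ?_⟩
        push_cast
        linear_combination H.sq - hc'
    · rw [Ideal.span_singleton_le_iff_mem]
      have : (q : R) = (q : R) * (u * q) + (-v) * ((w - t) * q) + v * (q * (w - ((1 - t : ℤ) : R))) := by
        push_cast
        linear_combination (-(q:R)) * huv'
      rw [this]
      refine Ideal.add_mem _ (Ideal.add_mem _ ?_ ?_) ?_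
      · exact Ideal.mul_mem_mul qP (Q.mul_mem_left _ qQ)
      · exact Ideal.mul_mem_left _ _ (Ideal.mul_mem_mul wP qQ)
      · exact Ideal.mul_mem_left _ _ (Ideal.mul_mem_mul qP wQ)
  have hn : Ideal.absNorm P * Ideal.absNorm Q = q ^ 2 := by rw [← map_mul, hmul, H.norm_q]
  obtain ⟨hPn, hQn⟩ := nat_sq_aux hq hn (by rwa [Ne, Ideal.absNorm_eq_one_iff]) (by rwa [Ne, Ideal.absNorm_eq_one_iff])
  refine IdxTwo.card_split hq P Q ?_ ?_ ?_ hPn hQn hmul k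
  · exact Ideal.isPrime_of_irreducible_absNorm (by rw [hPn]; exact hq)
  · exact Ideal.isPrime_of_irreducible_absNorm (by rw [hQn]; exact hq)
  · intro e
    apply n1
    rw [Ideal.eq_top_iff_one]
    have : (1 : R) = u * q + v * ((w - ((1 - t : ℤ) : R)) - (w - t)) := by
      push_cast
      linear_combination -huv'
    rw [this]
    exact P.add_mem (P.mul_mem_left _ qP) (P.mul_mem_left _ (P.sub_mem (e ▸ wQ) wP))

lemma QR.card_ram (H : QR R w m) {q : ℕ} (hq : q.Prime) (hqm : 4 * m - 1 = q) (k : ℕ) :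
    Nat.card {I : Ideal R // Ideal.absNorm I = q ^ k} = 1 := by
  have h1 : (4 : R) * m - 1 = q := by exact_mod_cast congrArg (Int.cast : ℤ → R) hqm
  have hsq : Ideal.span {2 * w - 1} ^ 2 = Ideal.span {(q : R)} := by
    rw [Ideal.span_singleton_pow, ← Ideal.span_singleton_neg]
    congr 2
    linear_combination h1 + (-4) * H.sq
  have hn : Ideal.absNorm (Ideal.span {2 * w - 1}) = q := by
    have := congrArg Ideal.absNorm hsq
    rw [map_pow, H.norm_q] at this
    exact Nat.pow_left_injective (two_ne_zero) this
  exact card_ramified hq _ (Ideal.isPrime_of_irreducible_absNorm (by rw [hn]; exact hq)) hn hsq k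

lemma QR.card_inert (H : QR R w m) {q : ℕ} (hq : q.Prime) (hr : ∀ t : ℤ, ¬ (q : ℤ) ∣ t ^ 2 - t + m) (k : ℕ) :
    Nat.card {I : Ideal R // Ideal.absNorm I = q ^ k} = if Even k then 1 else 0 := by
  refine IdxTwo.card_inert hq ?_ (H.norm_q q) k
  have hne : Ideal.span {(q : R)} ≠ ⊤ := by
    intro h; have := H.norm_q q
    rw [h, Ideal.absNorm_top] at this
    exact (Nat.one_lt_pow two_ne_zero hq.one_lt).ne this
  obtain ⟨M, hM, hqM⟩ := Ideal.exists_le_maximal _ hne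
  obtain ⟨J, hJ⟩ := Ideal.dvd_iff_le.mpr hqM
  have hn : Ideal.absNorm M * Ideal.absNorm J = q ^ 2 := by rw [← map_mul, ← hJ, H.norm_q]
  by_cases hJ1 : Ideal.absNorm J = 1
  · rw [Ideal.absNorm_eq_one_iff] at hJ1
    rw [hJ, hJ1, Ideal.mul_top]; exact hM.isPrime
  · exfalso
    obtain ⟨hMn, -⟩ := nat_sq_aux hq hn (by rw [Ne, Ideal.absNorm_eq_one_iff]; exact hM.ne_top) hJ1
    haveI : Finite (R ⧸ M) := (Ideal.absNorm_ne_zero_iff M).mp (by rw [hMn]; exact hq.ne_zero)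
    letI := Fintype.ofFinite (R ⧸ M)
    have hcard : Fintype.card (R ⧸ M) = q := by
      rw [← Nat.card_eq_fintype_card, ← hMn]; rfl
    let e := ZMod.ringEquivOfPrime (R ⧸ M) hq hcard
    haveI : NeZero q := ⟨hq.ne_zero⟩
    obtain ⟨t, ht⟩ := ZMod.intCast_surjective (e.symm (Ideal.Quotient.mk M w))
    apply hr t
    rw [← ZMod.intCast_zmod_eq_zero_iff_dvd]
    apply e.injective
    push_cast
    rw [ht, map_add, map_sub, map_pow, RingEquiv.apply_symm_apply, map_zero, map_intCast]
    have := congrArg (Ideal.Quotient.mk M) H.sq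
    rw [map_mul, map_sub, map_intCast] at this
    linear_combination this
end qr
end IdxTwo

namespace IdxTwo

lemma root_iff {l q : ℕ} [Fact l.Prime] (hl4 : l % 4 = 3) {m : ℤ} (hm : 4 * m - 1 = l) (hq : q.Prime)
    (hql : q ≠ l) : (∃ t : ℤ, (q : ℤ) ∣ t ^ 2 - t + m) ↔ quadraticChar (ZMod l) (q : ZMod l) = 1 := by
  haveI : Fact q.Prime := ⟨hq⟩
  have hq0 : ((q : ℕ) : ZMod l) ≠ 0 := by
    rw [Ne, ZMod.natCast_eq_zero_iff]
    intro h
    exact hql ((Nat.prime_dvd_prime_iff_eq Fact.out hq).mp h).symm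
  rcases eq_or_ne q 2 with rfl | hq2
  · rw [quadraticChar_one_iff_isSquare hq0]
    push_cast
    rw [ZMod.exists_sq_eq_two_iff (by omega)]
    constructor
    · rintro ⟨t, c, hc⟩
      have h1 : Even (t ^ 2 - t) := by
        have := Int.even_mul_pred_self t
        rwa [show t ^ 2 - t = t * (t - 1) by ring]
      obtain ⟨d, hd⟩ := h1
      omega
    · intro h
      refine ⟨0, ?_⟩
      norm_num
      omega
  · have hl0 : ((-(l : ℤ) : ℤ) : ZMod q) ≠ 0 := by
      rw [Ne, ZMod.intCast_zmod_eq_zero_iff_dvd, dvd_neg, Int.natCast_dvd_natCast]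
      intro h
      exact hql ((Nat.prime_dvd_prime_iff_eq hq Fact.out).mp h)
    have hrec : quadraticChar (ZMod l) (q : ZMod l) = legendreSym q (-(l : ℤ)) := by
      have h1 := legendreSym.quadratic_reciprocity' (p := q) (q := l) hq2 (by omega)
      have h2 : quadraticChar (ZMod l) (q : ZMod l) = legendreSym l q := by simp [legendreSym]
      rw [h2, h1, show (-(l:ℤ)) = (-1) * (l:ℤ) by ring, legendreSym.mul, legendreSym.at_neg_one hq2, ZMod.χ₄_eq_neg_one_pow (by
        rcases hq.eq_two_or_odd with h | h; exact absurd h hq2; exact h)]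
      congr 1
      rw [pow_mul]
      have hodd : Odd (l / 2) := by rw [Nat.odd_iff]; omega
      rcases neg_one_pow_eq_or ℤ (q/2) with h | h <;> rw [h]
      · simp
      · exact hodd.neg_one_pow
    rw [hrec, legendreSym.eq_one_iff q hl0]
    have h2 : (2 : ZMod q) ≠ 0 := by
      have : ((2 : ℕ) : ZMod q) ≠ 0 := by
        rw [Ne, ZMod.natCast_eq_zero_iff]
        intro h
        exact hq2 ((Nat.prime_dvd_prime_iff_eq hq Nat.prime_two).mp h)
      exact_mod_cast this
    have hm' : (4 : ZMod q) * m - 1 = l := by exact_mod_cast congrArg (Int.cast : ℤ → ZMod q) hm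
    constructor
    · rintro ⟨t, ht⟩
      rw [← ZMod.intCast_zmod_eq_zero_iff_dvd] at ht
      push_cast at ht ⊢
      exact ⟨2 * t - 1, by linear_combination -4 * ht + hm'⟩
    · rintro ⟨y, hy⟩
      obtain ⟨t, ht⟩ := ZMod.intCast_surjective ((y + 1) / 2)
      refine ⟨t, ?_⟩
      rw [← ZMod.intCast_zmod_eq_zero_iff_dvd]
      push_cast at hy ⊢
      rw [ht]
      have h4 : (4 : ZMod q) ≠ 0 := by
        have : (4 : ZMod q) = 2 * 2 := by norm_num
        rw [this]; exact mul_ne_zero h2 h2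
      apply mul_left_cancel₀ h4
      field_simp
      linear_combination -hy + hm'

section
variable {R : Type*} [CommRing R] [IsDedekindDomain R] [Module.Free ℤ R] [Module.Finite ℤ R]
  {w : R} {m : ℤ}

lemma zetaMul_pp (l : ℕ) [Fact l.Prime] {q : ℕ} (hq : q.Prime) (k : ℕ) :
    (qc l).zetaMul (q ^ k) = ∑ i ∈ Finset.range (k+1), (qc l q) ^ i := by
  rw [DirichletCharacter.zetaMul, ArithmeticFunction.coe_zeta_mul_apply]
  simp only [toArithmeticFunction, ArithmeticFunction.coe_mk,
    Nat.sum_divisors_prime_pow hq, pow_eq_zero_iff', hq.ne_zero, ne_eq, false_and, ↓reduceIte,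
    Nat.cast_pow, map_pow]

lemma QR.card_pp (H : QR R w m) (l : ℕ) [Fact l.Prime] (hl4 : l % 4 = 3) (hm : 4 * m - 1 = l)
    {q : ℕ} (hq : q.Prime) (k : ℕ) :
    (Nat.card {I : Ideal R // Ideal.absNorm I = q ^ k} : ℂ) = (qc l).zetaMul (q ^ k) := by
  rw [zetaMul_pp l hq, qc_apply]
  rcases eq_or_ne q l with hql | hql
  · rw [H.card_ram hq (by rw [hm, hql]), hql]
    simp [Finset.sum_range_succ', quadraticChar_eq_zero_iff.mpr]
  · by_cases h1 : quadraticChar (ZMod l) (q : ZMod l) = 1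
    · obtain ⟨t, ht⟩ := (root_iff hl4 hm hq hql).mpr h1
      rw [H.card_split hq ht ?_ k, h1]
      · simp
      · intro h2
        have : (q : ℤ) ∣ l := by
          rw [← hm]
          have h3 : (q : ℤ) ∣ 4 * (t ^ 2 - t + m) - (2 * t - 1) * (2 * t - 1) :=
            dvd_sub (ht.mul_left _) (h2.mul_left _)
          convert h3 using 1; ring
        rw [Int.natCast_dvd_natCast] at this
        exact hql ((Nat.prime_dvd_prime_iff_eq hq Fact.out).mp this)
    · have h2 := H.card_inert hq (fun t ht => h1 ((root_iff hl4 hm hq hql).mp ⟨t, ht⟩)) k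
      have hq0 : ((q : ℕ) : ZMod l) ≠ 0 := by
        rw [Ne, ZMod.natCast_eq_zero_iff]
        intro h
        exact hql ((Nat.prime_dvd_prime_iff_eq Fact.out hq).mp h).symm
      have h3 : quadraticChar (ZMod l) (q : ZMod l) = -1 :=
        (quadraticChar_dichotomy hq0).resolve_left h1
      rw [h2, h3]
      push_cast
      rw [neg_one_geom_sum]
      simp only [Nat.even_add_one]
      split_ifs <;> simp_all

lemma QR.card_eq (H : QR R w m) (l : ℕ) [Fact l.Prime] (hl4 : l % 4 = 3) (hm : 4 * m - 1 = l)
    {n : ℕ} (hn : n ≠ 0) :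
    (Nat.card {I : Ideal R // Ideal.absNorm I = n} : ℂ) = (qc l).zetaMul n := by
  let A : ArithmeticFunction ℂ :=
    ⟨fun n => if n = 0 then 0 else (Nat.card {I : Ideal R // Ideal.absNorm I = n} : ℂ), by simp⟩
  have hA : ∀ n ≠ 0, A n = (Nat.card {I : Ideal R // Ideal.absNorm I = n} : ℂ) := by
    intro n hn; simp [A, hn]
  have hmul : A.IsMultiplicative := by
    rw [ArithmeticFunction.IsMultiplicative.iff_ne_zero]
    refine ⟨?_, ?_⟩
    · rw [hA 1 one_ne_zero]
      simp [Ideal.absNorm_eq_one_iff]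
    · intro a b ha hb hab
      rw [hA _ (mul_ne_zero ha hb), hA a ha, hA b hb, card_norm_mul hab, Nat.cast_mul]
  have : A = (qc l).zetaMul := by
    rw [ArithmeticFunction.IsMultiplicative.eq_iff_eq_on_prime_powers _ hmul _ (DirichletCharacter.isMultiplicative_zetaMul _)]
    intro q k hq
    rw [hA _ (pow_ne_zero _ hq.ne_zero), H.card_pp l hl4 hm hq]
  rw [← hA n hn, this]
end
end IdxTwo

namespace IdxTwo
open scoped NumberField

lemma rat_of_mul_sq {l : ℕ} (hl : l.Prime) (y : ℚ) (c : ℤ) (h : (l : ℚ) * y ^ 2 = c) :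
    ∃ B : ℤ, y = B := by
  have h1 : IsIntegral ℤ ((l : ℚ) * y) := by
    refine ⟨X ^ 2 - C ((l : ℤ) * c), monic_X_pow_sub_C _ two_ne_zero, ?_⟩
    simp only [eval₂_sub, eval₂_pow, eval₂_X, eval₂_C]
    simp only [algebraMap_int_eq, map_mul, map_natCast, eq_intCast]
    rw [← h]; ring
  obtain ⟨z, hz⟩ := IsIntegrallyClosed.isIntegral_iff.mp h1
  have hz' : (z : ℚ) = l * y := by simpa using hz
  have h2 : z ^ 2 = l * c := by
    have : (z : ℚ) ^ 2 = l * c := by rw [hz', ← h]; ring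
    exact_mod_cast this
  have h3 : (l : ℤ) ∣ z := (Nat.prime_iff_prime_int.mp hl).dvd_of_dvd_pow ⟨c, h2⟩
  obtain ⟨B, rfl⟩ := h3
  refine ⟨B, ?_⟩
  have hl0 : (l : ℚ) ≠ 0 := by exact_mod_cast hl.ne_zero
  push_cast at hz'
  exact (mul_left_cancel₀ hl0 hz').symm

lemma conj_of_sq {l : ℕ} (hl : l ≠ 0) {z : ℂ} (hz : z ^ 2 = -l) : z.re = 0 := by
  have h1 := congrArg Complex.re hz
  have h2 := congrArg Complex.im hz
  simp [pow_two] at h1 h2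
  have hl' : (0:ℝ) < l := by exact_mod_cast Nat.pos_of_ne_zero hl
  by_contra h
  have h3 : z.im = 0 := by
    have : z.re * z.im = 0 := by linarith
    exact (mul_eq_zero.mp this).resolve_left h
  rw [h3] at h1
  nlinarith [sq_nonneg z.re]

section
variable (K : Type*) [Field K] [NumberField K] {s : K} {l : ℕ} {m : ℤ}

lemma phi_conj (hl : l ≠ 0) (hs : s ^ 2 = -l) (φ : K →+* ℂ) : starRingEnd ℂ (φ s) = - φ s := by
  have h : (φ s) ^ 2 = -l := by rw [← map_pow, hs]; simp
  have := conj_of_sq hl h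
  apply Complex.ext <;> simp [this]

lemma int_form (hl : l.Prime) (hl4 : l % 4 = 3) (hs : s ^ 2 = -l)
    (x : 𝓞 K) (u v : ℚ) (hx : (x : K) = u + v * s) : ∃ A B : ℤ, (A : ℚ) = 2 * u ∧ (B : ℚ) = 2 * v ∧ Even (A - B) := by
  obtain ⟨φ⟩ : Nonempty (K →+* ℂ) := inferInstance
  have hφ := phi_conj K hl.ne_zero hs φ
  have hφ2 : (φ s) ^ 2 = -l := by rw [← map_pow, hs]; simp
  have hxi : IsIntegral ℤ (φ x) := (NumberField.RingOfIntegers.isIntegral_coe x).map (φ.toIntAlgHom)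
  have hxi' : IsIntegral ℤ (starRingEnd ℂ (φ x)) := hxi.map ((starRingEnd ℂ).toIntAlgHom)
  have e1 : φ x = u + v * φ s := by rw [hx]; simp
  have e2 : starRingEnd ℂ (φ x) = u - v * φ s := by
    have h1 : starRingEnd ℂ (u : ℂ) = u := map_ratCast _ _
    have h2 : starRingEnd ℂ (v : ℂ) = v := map_ratCast _ _
    rw [e1, map_add, map_mul, h1, h2, hφ]; ring
  have hA : ∃ A : ℤ, (A : ℚ) = 2 * u := by
    have h1 : IsIntegral ℤ (algebraMap ℚ ℂ (2 * u)) := by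
      convert! hxi.add hxi' using 1
      rw [e2, e1]; simp; ring
    rw [isIntegral_algebraMap_iff (algebraMap ℚ ℂ).injective] at h1
    obtain ⟨z, hz⟩ := IsIntegrallyClosed.isIntegral_iff.mp h1
    exact ⟨z, by simpa using hz⟩
  have hn : ∃ n : ℤ, (n : ℚ) = u ^ 2 + l * v ^ 2 := by
    have h1 : IsIntegral ℤ (algebraMap ℚ ℂ (u ^ 2 + l * v ^ 2)) := by
      convert! hxi.mul hxi' using 1
      rw [e2, e1]; simp; linear_combination ((v:ℂ)^2) * hφ2
    rw [isIntegral_algebraMap_iff (algebraMap ℚ ℂ).injective] at h1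
    obtain ⟨z, hz⟩ := IsIntegrallyClosed.isIntegral_iff.mp h1
    exact ⟨z, by simpa using hz⟩
  obtain ⟨A, hA⟩ := hA
  obtain ⟨n, hn⟩ := hn
  obtain ⟨B, hB⟩ := rat_of_mul_sq hl (2 * v) (4 * n - A ^ 2) (by push_cast; rw [hA, hn]; ring)
  refine ⟨A, B, hA, hB.symm, ?_⟩
  have h4 : A ^ 2 + l * B ^ 2 = 4 * n := by
    have : (A : ℚ) ^ 2 + l * B ^ 2 = 4 * n := by rw [hA, hn, ← hB]; ring
    exact_mod_cast this
  have hlodd : Odd (l : ℤ) := by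
    rw [Int.odd_iff]; omega
  have h5 : Even (A ^ 2 + l * B ^ 2) := by rw [h4]; exact ⟨2 * n, by ring⟩
  rw [Int.even_add, Int.even_mul, Int.even_pow' two_ne_zero, Int.even_pow' two_ne_zero] at h5
  rw [Int.even_sub]
  rw [← Int.not_even_iff_odd] at hlodd
  tauto

lemma indep (hl : l ≠ 0) (hs : s ^ 2 = -l) (u v : ℚ) (h : (u : K) + v * s = 0) : u = 0 ∧ v = 0 := by
  have h1 : u ^ 2 + l * v ^ 2 = 0 := by
    have : ((u ^ 2 + l * v ^ 2 : ℚ) : K) = 0 := by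
      push_cast
      linear_combination (u - v * s) * h + (-(v:K)^2) * (-hs)
    exact_mod_cast this
  have hl' : (0:ℚ) < l := by exact_mod_cast Nat.pos_of_ne_zero hl
  have hv : v ^ 2 = 0 := by
    by_contra hv
    have : 0 < v ^ 2 := lt_of_le_of_ne (sq_nonneg v) (Ne.symm hv)
    nlinarith [sq_nonneg u, mul_pos hl' this]
  have hu : u ^ 2 = 0 := by rw [hv] at h1; simpa using h1
  exact ⟨by simpa using hu, by simpa using hv⟩

lemma exists_QR (hl : l.Prime) (hl4 : l % 4 = 3) (hm : 4 * m - 1 = l) (hs : s ^ 2 = -l)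
    (hgen : ∀ x : K, ∃ u v : ℚ, x = u + v * s) :
    ∃ (w : 𝓞 K), algebraMap (𝓞 K) K w = (1 + s) / 2 ∧ QR (𝓞 K) w m ∧ NumberField.discr K = -l := by
  have hmK : (4 : K) * m - 1 = l := by exact_mod_cast congrArg (Int.cast : ℤ → K) hm
  have hwi : IsIntegral ℤ ((1 + s) / 2) := by
    refine ⟨X ^ 2 - X + C m, by monicity!, ?_⟩
    simp only [eval₂_sub, eval₂_add, eval₂_pow, eval₂_X, eval₂_C]
    simp only [algebraMap_int_eq, eq_intCast]
    field_simp
    linear_combination hs + hmK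
  obtain ⟨w, hw⟩ : ∃ w : 𝓞 K, algebraMap (𝓞 K) K w = (1 + s) / 2 := ⟨⟨(1 + s) / 2, hwi⟩, rfl⟩
  have hsq : w * w = w - m := by
    apply NumberField.RingOfIntegers.ext
    simp only [map_mul, map_sub, map_intCast]
    rw [hw]
    field_simp
    linear_combination hs + hmK
  have hg : ∀ x : 𝓞 K, ∃ a b : ℤ, x = a + b * w := by
    intro x
    obtain ⟨u, v, hx⟩ := hgen x
    obtain ⟨A, B, hA, hB, c, hc⟩ := int_form K hl hl4 hs x u v hx
    refine ⟨c, B, ?_⟩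
    apply NumberField.RingOfIntegers.ext
    have hcK : (A : K) - B = c + c := by exact_mod_cast congrArg (Int.cast : ℤ → K) hc
    have hAK : (A : K) = 2 * u := by exact_mod_cast congrArg (Rat.cast : ℚ → K) hA
    have hBK : (B : K) = 2 * v := by exact_mod_cast congrArg (Rat.cast : ℚ → K) hB
    simp only [map_mul, map_add, map_intCast]
    rw [hx, hw]
    apply mul_left_cancel₀ (two_ne_zero (α := K))
    field_simp
    linear_combination hcK - hAK - s * hBK
  have hi : ∀ a b : ℤ, (a : 𝓞 K) + b * w = 0 → a = 0 ∧ b = 0 := by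
    intro a b h
    have h1 : (a : K) + b * ((1 + s) / 2) = 0 := by
      have := congrArg (algebraMap (𝓞 K) K) h
      simpa [hw] using this
    have h2 := indep K hl.ne_zero hs (a + b / 2) (b / 2) (by push_cast; linear_combination h1)
    have hb : b = 0 := by
      have := h2.2
      have : (b : ℚ) = 0 := by linarith
      exact_mod_cast this
    subst hb
    refine ⟨?_, rfl⟩
    have := h2.1
    simpa using this
  have hli : LinearIndependent ℤ ![(1 : 𝓞 K), w] := by
    rw [LinearIndependent.pair_iff]
    intro a b h
    apply hi a b
    simpa using h
  have hsp : ⊤ ≤ Submodule.span ℤ (Set.range ![(1 : 𝓞 K), w]) := by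
    intro x _
    obtain ⟨a, b, rfl⟩ := hg x
    rw [Matrix.range_cons, Matrix.range_cons, Matrix.range_empty, Set.union_empty]
    refine Submodule.add_mem _ ?_ ?_
    · have : (a : 𝓞 K) = a • (1 : 𝓞 K) := by simp
      rw [this]; exact Submodule.smul_mem _ _ (Submodule.subset_span (by simp))
    · rw [← zsmul_eq_mul]
      exact Submodule.smul_mem _ _ (Submodule.subset_span (by simp))
  let b := Module.Basis.mk hli hsp
  have hb0 : b 0 = 1 := by simp [b]
  have hb1 : b 1 = w := by simp [b]
  have hrepr : ∀ x y : ℤ, b.repr ((x : 𝓞 K) + y * w) = Finsupp.single 0 x + Finsupp.single 1 y := by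
    intro x y
    have : (x : 𝓞 K) + y * w = x • b 0 + y • b 1 := by rw [hb0, hb1]; simp
    rw [this, map_add, map_smul, map_smul, b.repr_self, b.repr_self]
    simp
  have hfr : Module.finrank ℤ (𝓞 K) = 2 := by rw [Module.finrank_eq_card_basis b]; rfl
  have htr : ∀ x y : ℤ, Algebra.trace ℤ (𝓞 K) ((x : 𝓞 K) + y * w) = 2 * x + y := by
    intro x y
    rw [Algebra.trace_eq_matrix_trace b, Matrix.trace_fin_two, Algebra.leftMulMatrix_apply]
    have e1 : ((x : 𝓞 K) + y * w) * b 0 = (x : 𝓞 K) + y * w := by rw [hb0, mul_one]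
    have e2 : ((x : 𝓞 K) + y * w) * b 1 = ((- y * m : ℤ) : 𝓞 K) + ((x + y : ℤ) : 𝓞 K) * w := by
      rw [hb1]; push_cast; linear_combination (y : 𝓞 K) * hsq
    simp only [LinearMap.toMatrix_apply, Algebra.coe_lmul_eq_mul, LinearMap.mul_apply', e1, e2, hrepr]
    simp
    ring
  refine ⟨w, hw, ⟨hsq, hg, hi, hfr⟩, ?_⟩
  rw [← NumberField.discr_eq_discr K b, Algebra.discr_def, Matrix.det_fin_two]
  simp only [Algebra.traceMatrix_apply, Algebra.traceForm_apply, hb0, hb1, one_mul, mul_one, hsq]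
  have t1 := htr 1 0
  have t2 := htr 0 1
  have t3 := htr (-m) 1
  simp only [Int.cast_one, Int.cast_zero, zero_mul, add_zero, one_mul, zero_add] at t1 t2
  rw [show ((-m : ℤ) : 𝓞 K) + ((1 : ℤ) : 𝓞 K) * w = w - m by push_cast; ring] at t3
  rw [t1, t2, t3]
  linarith
end
end IdxTwo

namespace IdxTwo
open scoped NumberField
open NumberField NumberField.InfinitePlace NumberField.Units
section
variable (K : Type*) [Field K] [NumberField K] {s : K} {l : ℕ} {m : ℤ}

lemma tot_complex (hl : l ≠ 0) (hs : s ^ 2 = -l) : nrRealPlaces K = 0 := by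
  rw [nrRealPlaces_eq_zero_iff]
  refine ⟨fun v => ?_⟩
  rw [← not_isReal_iff_isComplex, isReal_iff, ComplexEmbedding.isReal_iff]
  intro h
  have h1 := phi_conj K hl hs v.embedding
  have h2 := RingHom.congr_fun h s
  rw [ComplexEmbedding.conjugate_coe_eq, h1] at h2
  have h3 : v.embedding s = 0 := neg_eq_self.mp h2
  have h4 : s = 0 := (map_eq_zero _).mp h3
  rw [h4] at hs
  have := hs; simp at this; exact hl this

lemma cplx_one (hl : l ≠ 0) (hs : s ^ 2 = -l) (hfr : Module.finrank ℤ (𝓞 K) = 2) :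
    nrComplexPlaces K = 1 := by
  have h := card_add_two_mul_card_eq_rank K
  rw [tot_complex K hl hs, ← RingOfIntegers.rank, hfr] at h
  omega

lemma reg_one (hl : l ≠ 0) (hs : s ^ 2 = -l) (hfr : Module.finrank ℤ (𝓞 K) = 2) :
    regulator K = 1 := by
  classical
  have h : Fintype.card (InfinitePlace K) = 1 := by
    rw [card_eq_nrRealPlaces_add_nrComplexPlaces, tot_complex K hl hs, cplx_one K hl hs hfr]
  have hsub := Fintype.card_le_one_iff.mp h.le
  rw [regulator_eq_det']
  haveI : IsEmpty {w : InfinitePlace K // w ≠ NumberField.Units.dirichletUnitTheorem.w₀} :=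
    ⟨fun w => w.2 (hsub _ _)⟩
  rw [Matrix.det_isEmpty, abs_one]

lemma tors_two (hl : l.Prime) (hl4 : l % 4 = 3) (hl3 : 3 < l) (hs : s ^ 2 = -l)
    (hgen : ∀ x : K, ∃ u v : ℚ, x = u + v * s) : torsionOrder K = 2 := by
  have key : ∀ x : (𝓞 K)ˣ, x ∈ torsion K → x = 1 ∨ x = -1 := by
    intro x hx
    rw [mem_torsion] at hx
    obtain ⟨w⟩ : Nonempty (InfinitePlace K) := inferInstance
    have hw := hx w
    rw [← norm_embedding_eq] at hw
    set φ := w.embedding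
    obtain ⟨u, v, huv⟩ := hgen (algebraMap (𝓞 K) K x)
    obtain ⟨A, B, hA, hB, -⟩ := int_form K hl hl4 hs x u v huv
    have hφ2 : (φ s) ^ 2 = -l := by rw [← map_pow, hs]; simp
    have hre := conj_of_sq hl.ne_zero hφ2
    have him : (φ s).im ^ 2 = l := by
      have := congrArg Complex.re hφ2
      simp [pow_two, hre] at this
      rw [pow_two]; linarith
    rw [huv] at hw
    have h1 : (u : ℝ) ^ 2 + l * (v : ℝ) ^ 2 = 1 := by
      have h2 : Complex.normSq (φ (u + v * s)) = 1 := by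
        rw [Complex.normSq_eq_norm_sq, hw]; norm_num
      rw [Complex.normSq_apply, map_add, map_mul, map_ratCast, map_ratCast] at h2
      simp [hre] at h2
      nlinarith
    have h2 : A ^ 2 + l * B ^ 2 = 4 := by
      have h3 : (A : ℚ) ^ 2 + l * B ^ 2 = 4 := by
        have h1' : u ^ 2 + l * v ^ 2 = 1 := by exact_mod_cast h1
        rw [hA, hB]; linarith
      exact_mod_cast h3
    have hB0 : B = 0 := by
      by_contra hB0
      have : 1 ≤ B ^ 2 := by have := sq_pos_of_ne_zero hB0; omega
      have h5 : (5 : ℤ) ≤ l := by omega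
      nlinarith [sq_nonneg A]
    have hv : v = 0 := by rw [hB0] at hB; push_cast at hB; linarith
    have hA2 : A = 2 ∨ A = -2 := by
      rw [hB0] at h2
      have : (A - 2) * (A + 2) = 0 := by linarith
      rcases mul_eq_zero.mp this with h | h
      · left; linarith
      · right; linarith
    rcases hA2 with h | h
    · left
      have hu : u = 1 := by rw [h] at hA; push_cast at hA; linarith
      apply Units.ext
      apply RingOfIntegers.ext
      refine huv.trans ?_
      rw [hu, hv]; simp
    · right
      have hu : u = -1 := by rw [h] at hA; push_cast at hA; linarith
      apply Units.ext
      apply RingOfIntegers.ext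
      refine huv.trans ?_
      rw [hu, hv]; simp
  have hn1 : (-1 : (𝓞 K)ˣ) ∈ torsion K := by
    rw [mem_torsion]; intro w; simp; rw [InfinitePlace.coe_apply]; simp
  rw [torsionOrder, Nat.card_eq_two_iff]
  refine ⟨1, ⟨-1, hn1⟩, ?_, ?_⟩
  · intro h
    have h1 := congrArg (fun x : torsion K => (((x : (𝓞 K)ˣ) : 𝓞 K) : K)) h
    simp at h1
    have h2 : (2 : K) = 0 := by linear_combination h1
    exact two_ne_zero h2
  · rw [Set.eq_univ_iff_forall]
    rintro ⟨x, hx⟩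
    rcases key x hx with rfl | rfl
    · left; rfl
    · right; rfl

lemma L_one_eq [Fact l.Prime] (hl4 : l % 4 = 3) (hl3 : 3 < l) (hs : s ^ 2 = -l)
    (hgen : ∀ x : K, ∃ u v : ℚ, x = u + v * s) :
    DirichletCharacter.LFunction (qc l) 1 = ((Real.pi * classNumber K / Real.sqrt l : ℝ) : ℂ) := by
  have hl : l.Prime := Fact.out
  obtain ⟨m, hm⟩ : ∃ m : ℤ, 4 * m - 1 = l := ⟨(l + 1) / 4, by omega⟩
  obtain ⟨w, hw, H, hd⟩ := exists_QR K hl hl4 hm hs hgen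
  have hres : dedekindZeta_residue K = Real.pi * classNumber K / Real.sqrt l := by
    rw [dedekindZeta_residue_def, tot_complex K hl.ne_zero hs, cplx_one K hl.ne_zero hs H.fr,
      reg_one K hl.ne_zero hs H.fr, tors_two K hl hl4 hl3 hs hgen, hd]
    have : |((-(l:ℤ) : ℤ) : ℝ)| = l := by push_cast; rw [abs_neg, Nat.abs_cast]
    push_cast at this ⊢
    rw [this]
    have : Real.sqrt l ≠ 0 := by
      rw [Real.sqrt_ne_zero']; exact_mod_cast hl.pos
    field_simp
    try ring
  have h1 := tendsto_sub_one_mul_dedekindZeta_nhdsGT K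
  rw [hres] at h1
  have h2 : Filter.Tendsto (fun t : ℝ => ((t : ℂ) - 1) * riemannZeta t * DirichletCharacter.LFunction (qc l) t)
      (nhdsWithin 1 (Set.Ioi 1)) (nhds (1 * DirichletCharacter.LFunction (qc l) 1)) := by
    have hcast : Filter.Tendsto (fun t : ℝ => (t : ℂ)) (nhdsWithin 1 (Set.Ioi 1)) (nhdsWithin 1 {1}ᶜ) := by
      apply tendsto_nhdsWithin_of_tendsto_nhds_of_eventually_within
      · have : Filter.Tendsto (fun t : ℝ => (t : ℂ)) (nhds 1) (nhds ((1:ℝ):ℂ)) := 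
          Complex.continuous_ofReal.tendsto 1
        rw [Complex.ofReal_one] at this
        exact this.mono_left nhdsWithin_le_nhds
      · filter_upwards [self_mem_nhdsWithin] with t ht
        simp only [Set.mem_compl_iff, Set.mem_singleton_iff]
        intro h
        have : t = 1 := by exact_mod_cast h
        rw [this] at ht
        exact lt_irrefl (1:ℝ) (Set.mem_Ioi.mp ht)
    refine Filter.Tendsto.mul (riemannZeta_residue_one.comp hcast) ?_
    have hc : Continuous (DirichletCharacter.LFunction (qc l)) :=
      (DirichletCharacter.differentiable_LFunction (qc_ne_one l (by omega))).continuous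
    exact (hc.tendsto 1).comp (hcast.mono_right nhdsWithin_le_nhds)
  rw [one_mul] at h2
  refine tendsto_nhds_unique (h2.congr' ?_) h1
  filter_upwards [self_mem_nhdsWithin] with t ht
  have ht' : 1 < (t : ℂ).re := by simpa using ht
  rw [mul_assoc]
  congr 1
  have hz : dedekindZeta K t = LSeries (qc l).zetaMul t := by
    rw [dedekindZeta]
    apply LSeries_congr
    intro n hn
    exact H.card_eq l hl4 hm hn
  rw [hz, DirichletCharacter.zetaMul, ← ArithmeticFunction.coe_mul, LSeries_convolution']
  · rw [DirichletCharacter.LFunction_eq_LSeries _ ht', ← ArithmeticFunction.LSeries_zeta_eq_riemannZeta ht']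
    congr 1
    exact LSeries_congr (DirichletCharacter.apply_eq_toArithmeticFunction_apply (qc l)) t
  · exact ArithmeticFunction.LSeriesSummable_zeta_iff.mpr ht'
  · exact (LSeriesSummable_congr _ fun h ↦ (DirichletCharacter.apply_eq_toArithmeticFunction_apply (qc l) h).symm).mpr <|
      ZMod.LSeriesSummable_of_one_lt_re (qc l) ht'

lemma class_formula [Fact l.Prime] (hl4 : l % 4 = 3) (hl3 : 3 < l) (hs : s ^ 2 = -l)
    (hgen : ∀ x : K, ∃ u v : ℚ, x = u + v * s) :
    (l * classNumber K : ℤ) = |∑ a : ZMod l, (a.val : ℤ) * quadraticChar (ZMod l) a| := by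
  have h1 := L_one l hl4
  have hl0 : (0:ℝ) < l := by exact_mod_cast (Fact.out : l.Prime).pos
  have hsq : Real.sqrt l ≠ 0 := by
      rw [Real.sqrt_ne_zero']; exact hl0
  rw [L_one_eq K hl4 hl3 hs hgen, Complex.norm_of_nonneg (by positivity)] at h1
  have hpi := Real.pi_pos.ne'
  field_simp at h1
  have h2 : ((l * classNumber K : ℤ) : ℝ) = ((|∑ a : ZMod l, (a.val : ℤ) * quadraticChar (ZMod l) a| : ℤ) : ℝ) := by
    rw [Int.cast_abs]
    push_cast at h1 ⊢
    linarith
  exact_mod_cast h2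

lemma sum_mod_two (l : ℕ) [Fact l.Prime] (hl4 : l % 4 = 3) :
    Odd (∑ a : ZMod l, (a.val : ℤ) * quadraticChar (ZMod l) a) := by
  have h1 : Even (∑ a : ZMod l, (a.val : ℤ) * quadraticChar (ZMod l) a - ∑ a : ZMod l, (a.val : ℤ)) := by
    rw [← Finset.sum_sub_distrib]
    apply Finset.even_sum
    intro a _
    by_cases ha : a = 0
    · rw [ha]; simp
    · rcases quadraticChar_dichotomy ha with h | h
      · rw [h]; simp
      · rw [h]; exact ⟨-a.val, by ring⟩
  have h2 : Odd (∑ a : ZMod l, (a.val : ℤ)) := by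
    have h3 : ∑ a : ZMod l, (a.val : ℤ) = ∑ i ∈ Finset.range l, (i : ℤ) := by
      obtain ⟨n, rfl⟩ : ∃ n, l = n + 1 := ⟨l - 1, by omega⟩
      rw [Finset.sum_range]; rfl
    rw [h3, ← Nat.cast_sum, Finset.sum_range_id]
    obtain ⟨k, rfl⟩ : ∃ k, l = 4 * k + 3 := ⟨l / 4, by omega⟩
    have : (4 * k + 3) * (4 * k + 3 - 1) / 2 = (4 * k + 3) * (2 * k + 1) := by
      apply Nat.div_eq_of_eq_mul_left (by norm_num)
      have : 4 * k + 3 - 1 = 4 * k + 2 := by omega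
      rw [this]; ring
    rw [this]
    refine ⟨(4 * k ^ 2 + 5 * k + 1 : ℤ), ?_⟩
    push_cast; ring
  have := h1.add_odd h2
  simpa using this

end

lemma class_final (l : ℕ) [Fact l.Prime] (hl4 : l % 4 = 3) (hl3 : 3 < l) :
    (l * classNumSqrtNeg l : ℤ) = |∑ a : ZMod l, (a.val : ℤ) * quadraticChar (ZMod l) a| := by
  have hl : l.Prime := Fact.out
  haveI : FiniteDimensional ℚ ℚ⟮sqrtNeg l⟯ :=
    IntermediateField.adjoin.finiteDimensional (isIntegral_sqrtNeg l)
  haveI : CharZero ℚ⟮sqrtNeg l⟯ :=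
    charZero_of_injective_algebraMap (algebraMap ℚ ℚ⟮sqrtNeg l⟯).injective
  haveI : NumberField ℚ⟮sqrtNeg l⟯ := ⟨⟩
  have hs : (AdjoinSimple.gen ℚ (sqrtNeg l)) ^ 2 = -(l : ℚ⟮sqrtNeg l⟯) := by
    apply Subtype.ext
    push_cast
    rw [AdjoinSimple.coe_gen, sqrtNeg_sq]
  refine class_formula ℚ⟮sqrtNeg l⟯ hl4 hl3 hs ?_
  rintro ⟨x, hx'⟩
  have hx := hx'
  rw [← mem_toSubalgebra, IntermediateField.adjoin_simple_toSubalgebra_of_isAlgebraic 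
    (isIntegral_sqrtNeg l).isAlgebraic] at hx
  have key : ∃ u v : ℚ, x = u + v * sqrtNeg l := by
    clear hx'
    induction hx using Algebra.adjoin_induction with
    | mem x hx => 
      rw [Set.mem_singleton_iff] at hx
      exact ⟨0, 1, by rw [hx]; simp⟩
    | algebraMap r => exact ⟨r, 0, by simp⟩
    | add x y _ _ h1 h2 =>
      obtain ⟨u, v, rfl⟩ := h1
      obtain ⟨u', v', rfl⟩ := h2
      exact ⟨u + u', v + v', by push_cast; ring⟩
    | mul x y _ _ h1 h2 =>
      obtain ⟨u, v, rfl⟩ := h1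
      obtain ⟨u', v', rfl⟩ := h2
      refine ⟨u * u' - v * v' * l, u * v' + v * u', ?_⟩
      push_cast
      linear_combination (v * v' : ℂ) * sqrtNeg_sq l
  obtain ⟨u, v, huv⟩ := key
  refine ⟨u, v, ?_⟩
  apply Subtype.ext
  push_cast
  rw [AdjoinSimple.coe_gen]; exact huv

lemma class_odd (l : ℕ) [Fact l.Prime] (hl4 : l % 4 = 3) (hl3 : 3 < l) :
    Odd (classNumSqrtNeg l) := by
  have h1 := sum_mod_two l hl4
  rw [← odd_abs, ← class_final l hl4 hl3, Int.odd_mul] at h1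
  exact_mod_cast h1.2

end IdxTwo

namespace IdxTwo
section
variable (p : ℕ) [hp : Fact p.Prime] (F : Type) [Field F] [Fintype F] [Algebra (ZMod p) F]

lemma zetaP_prim : IsPrimitiveRoot (zetaP p) p := by
  exact Complex.isPrimitiveRoot_exp p hp.out.ne_zero

noncomputable def psi : AddChar F ℂ :=
  (AddChar.zmodChar p (zetaP_prim p).pow_eq_one).compAddMonoidHom
    (Algebra.trace (ZMod p) F).toAddMonoidHom

variable {F}
lemma psi_apply (x : F) : psi p F x = zetaP p ^ (Algebra.trace (ZMod p) F x).val := by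
  simp [psi, AddChar.zmodChar_apply]

lemma psi_ne_one : psi p F ≠ 1 := by
  intro h
  obtain ⟨x, hx⟩ := Algebra.trace_surjective (ZMod p) F 1
  have h1 := psi_apply p x
  rw [h, hx, ZMod.val_one, pow_one, AddChar.one_apply] at h1
  exact (zetaP_prim p).ne_one hp.out.one_lt h1.symm

lemma psi_prim : (psi p F).IsPrimitive := AddChar.IsPrimitive.of_ne_one (psi_ne_one p)

lemma gaussSumN_eq (χ : MulChar F ℂ) (k : ℕ) : gaussSumN p χ k = gaussSum (χ ^ k) (psi p F) := by
  classical
  rw [gaussSumN, gaussSum]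
  simp only [psi_apply]
  apply Finset.sum_subset_zero_on_sdiff (Finset.subset_univ _)
  · intro x hx
    simp at hx
    rw [hx, MulChar.map_zero, zero_mul]
  · intros; rfl

lemma gauss_frob (χ : MulChar F ℂ) : gaussSum (χ ^ p) (psi p F) = gaussSum χ (psi p F) := by
  rw [gaussSum, gaussSum]
  haveI : CharP F p := charP_of_injective_algebraMap (algebraMap (ZMod p) F).injective p
  rw [← Function.Bijective.sum_comp (e := fun x : F => x ^ p) (bijective_frobenius F p)
    (fun x => χ x * psi p F x)]
  refine Finset.sum_congr rfl fun x _ => ?_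
  rw [MulChar.pow_apply' _ hp.out.ne_zero, map_pow, psi_apply, psi_apply]
  congr 3
  apply (algebraMap (ZMod p) F).injective
  rw [FiniteField.algebraMap_trace_eq_sum_pow, FiniteField.algebraMap_trace_eq_sum_pow]
  simp only [Nat.card_zmod, ← pow_mul, ← pow_succ']
  set n := Module.finrank (ZMod p) F
  have h := Finset.sum_range_succ' (fun i => x ^ p ^ i) n
  rw [Finset.sum_range_succ] at h
  have hx : x ^ p ^ n = x ^ p ^ 0 := by
    have : Fintype.card F = p ^ n := by
      rw [Module.card_eq_pow_finrank (K := ZMod p) (V := F), ZMod.card]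
    rw [← this, FiniteField.pow_card, pow_zero, pow_one]
  rw [hx] at h
  exact add_right_cancel h

lemma gauss_frob_pow (χ : MulChar F ℂ) (i : ℕ) : gaussSum (χ ^ p ^ i) (psi p F) = gaussSum χ (psi p F) := by
  induction i with
  | zero => simp
  | succ i ih => rw [pow_succ, pow_mul, gauss_frob, ih]

lemma gauss_triv : gaussSum (1 : MulChar F ℂ) (psi p F) = -1 :=
  gaussSum_one_left (psi_ne_one p)

lemma gauss_scale (χ : MulChar F ℂ) (h : ∀ c : ZMod p, c ≠ 0 → χ (algebraMap _ F c) = 1)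
    (c : ℕ) (hc : c.Coprime p) : ∑ x : F, χ x * psi p F x ^ c = gaussSum χ (psi p F) := by
  have hc0 : (c : ZMod p) ≠ 0 := by
    rw [Ne, ZMod.natCast_eq_zero_iff]
    intro hd
    exact hp.out.one_lt.ne' (Nat.dvd_one.mp (hc ▸ Nat.dvd_gcd hd dvd_rfl))
  have hcF : (c : F) ≠ 0 := by
    rw [← map_natCast (algebraMap (ZMod p) F)]
    exact (_root_.map_ne_zero _).mpr hc0
  have hχ : χ (c : F) = 1 := by
    rw [← map_natCast (algebraMap (ZMod p) F)]
    exact h _ hc0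
  rw [gaussSum, ← Equiv.sum_comp (Equiv.mulLeft₀ (c : F) hcF) (fun x => χ x * psi p F x)]
  refine Finset.sum_congr rfl fun x _ => ?_
  rw [show Equiv.mulLeft₀ (c : F) hcF x = c * x from rfl, map_mul, hχ, one_mul, ← nsmul_eq_mul, AddChar.map_nsmul_eq_pow]

lemma gauss_inv (χ : MulChar F ℂ) (hχ : χ ≠ 1) (h1 : χ (-1) = 1) :
    gaussSum χ (psi p F) * gaussSum χ⁻¹ (psi p F) = Fintype.card F := by
  rw [← gaussSum_mul_gaussSum_eq_card hχ (psi_prim p)]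
  have := mul_gaussSum_inv_eq_gaussSum χ⁻¹ (psi p F)
  rw [← this]
  have h2 : χ⁻¹ (-1) = 1 := by
    rw [MulChar.inv_apply', inv_neg, inv_one, h1]
  rw [h2, one_mul]

end
end IdxTwo

namespace IdxTwo
section

lemma val_int (V : ValuationSubring ℂ) {x : ℂ} (hx : IsIntegral ℤ x) : V.valuation x ≤ 1 := by
  rw [ValuationSubring.valuation_le_one_iff]
  obtain ⟨y, hy⟩ := IsIntegrallyClosed.isIntegral_iff.mp (hx.tower_top (A := V))
  rw [← hy]; exact y.2

lemma exists_teich (F : Type) [Field F] [Fintype F] : ∃ (V : ValuationSubring ℂ) (ω : MulChar F ℂ),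
    orderOf ω = Fintype.card F - 1 ∧ (∀ χ : MulChar F ℂ, ∃ c : ℕ, χ = (ω⁻¹) ^ c) ∧ ∀ n : F → ℤ,
      ∑ x, (n x : F) * x = 0 → V.valuation (∑ x, (n x : ℂ) * ω x) < 1 := by
  classical
  set m := Fintype.card F - 1 with hm
  have hm0 : 0 < m := by
    have := Fintype.one_lt_card (α := F); omega
  have hcm : Fintype.card Fˣ = m := Fintype.card_units F
  obtain ⟨g, hg⟩ := IsCyclic.exists_generator (α := Fˣ)
  set ζ : ℂ := Complex.exp (2 * Real.pi * Complex.I / m) with hζ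
  have hζp : IsPrimitiveRoot ζ m := Complex.isPrimitiveRoot_exp m hm0.ne'
  set ζu : ℂˣ := hζp.isUnit hm0.ne' |>.unit with hζu
  have hζu' : (ζu : ℂ) = ζ := rfl
  have hmem : ζu ∈ rootsOfUnity (Fintype.card Fˣ) ℂ := by
    rw [_root_.mem_rootsOfUnity, hcm]
    apply Units.ext
    push_cast; rw [hζu', hζp.pow_eq_one]
  set ω : MulChar F ℂ := MulChar.ofRootOfUnity hmem hg
  have hω : ω g = ζ := MulChar.ofRootOfUnity_spec hmem hg
  have hog : orderOf g = m := by
    rw [orderOf_eq_card_of_forall_mem_zpowers hg, Nat.card_eq_fintype_card, hcm]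
  have hgp : IsPrimitiveRoot (g : F) m := by
    rw [IsPrimitiveRoot.coe_units_iff, ← hog]; exact IsPrimitiveRoot.orderOf g
  haveI : NeZero ((m : ℕ) : F) := by
    constructor
    rw [hm, Nat.cast_sub Fintype.card_pos, FiniteField.cast_card_eq_zero]; simp
  have hroot : aeval (g : F) (cyclotomic m ℤ) = 0 := by
    rw [aeval_def, eval₂_eq_eval_map, map_cyclotomic]
    exact (isRoot_cyclotomic_iff).mpr hgp
  have hlog : ∀ x : F, ∃ k : ℕ, x ≠ 0 → x = g ^ k := by
    intro x
    by_cases hx : x = 0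
    · exact ⟨0, fun h => absurd hx h⟩
    obtain ⟨k, hk⟩ := (mem_powers_iff_mem_zpowers).mpr (hg (Units.mk0 x hx))
    refine ⟨k, fun _ => ?_⟩
    have := congrArg Units.val hk
    simpa using this.symm
  choose k hk using hlog
  have hωk : ∀ x : F, x ≠ 0 → ω x = ζ ^ k x := by
    intro x hx; conv_lhs => rw [hk x hx]
    rw [map_pow, hω]
  set θ : ℤ[X] →+* ℂ := (aeval ζ : ℤ[X] →ₐ[ℤ] ℂ).toRingHom with hθ
  set I : Ideal θ.range := Ideal.map θ.rangeRestrict (RingHom.ker (aeval (g : F) : ℤ[X] →ₐ[ℤ] F).toRingHom) with hI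
  have hsur : Function.Surjective θ.rangeRestrict := θ.rangeRestrict_surjective
  have hIne : I ≠ ⊤ := by
    rw [Ne, Ideal.eq_top_iff_one, hI, Ideal.mem_map_iff_of_surjective _ hsur]
    rintro ⟨P, hP, hP1⟩
    have h1 : aeval (g : F) P = 0 := hP
    have h2 : aeval ζ P = 1 := congrArg Subtype.val hP1
    have h3 : aeval ζ (P - 1) = 0 := by rw [map_sub, h2, map_one, sub_self]
    have h4 : cyclotomic m ℤ ∣ P - 1 := by
      rw [cyclotomic_eq_minpoly hζp hm0]
      exact minpoly.isIntegrallyClosed_dvd (hζp.isIntegral hm0) h3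
    obtain ⟨Q, hQ⟩ := h4
    have h5 := congrArg (aeval (g : F)) hQ
    rw [map_sub, map_mul, hroot, h1, map_one] at h5
    simp at h5
  obtain ⟨V, -, hV⟩ := Ideal.image_subset_nonunits_valuationSubring I hIne
  refine ⟨V, ω, ?_, ?_, ?_⟩
  · rw [orderOf_eq_iff hm0]
    constructor
    · rw [MulChar.eq_iff hg, MulChar.pow_apply' _ hm0.ne', hω, hζp.pow_eq_one, MulChar.one_apply_coe]
    · intro j hj hj0 h
      have := congrArg (fun χ : MulChar F ℂ => χ g) h
      simp only [MulChar.one_apply_coe, MulChar.pow_apply_coe, hω] at this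
      exact hζp.pow_ne_one_of_pos_of_lt hj0.ne' hj this
  · intro χ
    haveI : NeZero m := ⟨hm0.ne'⟩
    have h1 : χ g ^ m = 1 := by
      rw [← map_pow, hgp.pow_eq_one, map_one]
    obtain ⟨c, hc, hc2⟩ := hζp.inv.eq_pow_of_pow_eq_one h1
    refine ⟨c, ?_⟩
    rw [MulChar.eq_iff hg, ← hc2, MulChar.pow_apply_coe, MulChar.inv_apply_eq_inv', hω]
  · intro n hn
    set P : ℤ[X] := ∑ x : F, if x = 0 then 0 else C (n x) * X ^ k x with hP
    have h1 : θ.rangeRestrict P ∈ I := by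
      apply Ideal.mem_map_of_mem
      rw [RingHom.mem_ker]
      change aeval (g : F) _ = 0
      rw [hP, map_sum]
      refine Eq.trans ?_ hn
      refine Finset.sum_congr rfl fun x _ => ?_
      by_cases hx : x = 0
      · simp [hx]
      · rw [if_neg hx]
        simp [← hk x hx]
    have h2 := hV ⟨_, h1, rfl⟩
    have h3 : θ.range.subtype (θ.rangeRestrict P) = ∑ x, (n x : ℂ) * ω x := by
      change aeval ζ _ = _
      rw [hP, map_sum]
      refine Finset.sum_congr rfl fun x _ => ?_
      by_cases hx : x = 0
      · rw [if_pos hx, hx, MulChar.map_zero]; simp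
      · rw [if_neg hx, hωk x hx]; simp
    rw [h3] at h2
    exact h2

end
end IdxTwo

namespace IdxTwo
section
variable (p : ℕ) [hp : Fact p.Prime] {F : Type} [Field F] [Fintype F] [Algebra (ZMod p) F]
  (V : ValuationSubring ℂ)

lemma zetaP_int : IsIntegral ℤ (zetaP p) := (zetaP_prim p).isIntegral hp.out.pos

lemma one_sub_pow_expand (x : ℂ) (hx : IsIntegral ℤ x) (t : ℕ) :
    ∃ y : ℂ, IsIntegral ℤ y ∧ (1 - x) ^ t = 1 - t * x + x ^ 2 * y := by
  induction t with
  | zero => exact ⟨0, isIntegral_zero, by simp⟩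
  | succ t ih =>
    obtain ⟨y, hy, h⟩ := ih
    refine ⟨t + y - x * y, ?_, ?_⟩
    · refine (IsIntegral.add ?_ hy).sub (hx.mul hy)
      exact_mod_cast isIntegral_algebraMap (R := ℤ) (A := ℂ) (x := (t : ℤ))
    · rw [pow_succ, h]; push_cast; ring

lemma val_pi_pow : V.valuation (1 - zetaP p) ^ (p - 1) = V.valuation p := by
  obtain ⟨n, hn⟩ : ∃ n, p = n + 1 := ⟨p - 1, by have := hp.out.pos; omega⟩
  have hz := zetaP_prim p
  have h := (hn ▸ hz : IsPrimitiveRoot (zetaP p) (n + 1)).prod_one_sub_pow_eq_order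
  have h2 : (p : ℂ) = ∏ k ∈ Finset.range n, (1 - zetaP p ^ (k + 1)) := by
    rw [h]; exact_mod_cast hn
  rw [h2, map_prod]
  have key : ∀ (z : ℂ) (j : ℕ), IsIntegral ℤ z → V.valuation (1 - z ^ j) ≤ V.valuation (1 - z) := by
    intro z j hz
    have h3 : 1 - z ^ j = (1 - z) * ∑ i ∈ Finset.range j, z ^ i := by
      rw [mul_neg_geom_sum]
    rw [h3, map_mul]
    refine mul_le_of_le_one_right' ?_
    exact val_int V (IsIntegral.sum _ fun i _ => hz.pow i)
  rw [Finset.prod_congr rfl (g := fun _ => V.valuation (1 - zetaP p))]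
  · simp [hn]
  · intro k hk
    apply le_antisymm (key _ _ (zetaP_int p))
    have hcop : (k + 1).Coprime p := by
      rw [Nat.coprime_comm, hp.out.coprime_iff_not_dvd]
      intro hd
      have := Nat.le_of_dvd (by omega) hd
      rw [Finset.mem_range] at hk; omega
    have hz' := hz.pow_of_coprime _ hcop
    haveI : NeZero p := ⟨hp.out.ne_zero⟩
    obtain ⟨i, -, hi⟩ := hz'.eq_pow_of_pow_eq_one hz.pow_eq_one
    calc V.valuation (1 - zetaP p) = V.valuation (1 - (zetaP p ^ (k + 1)) ^ i) := by rw [hi]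
      _ ≤ _ := key _ _ ((zetaP_int p).pow _)

variable {V} {ω : MulChar F ℂ}

lemma val_p_lt (T : ∀ n : F → ℤ, ∑ x, (n x : F) * x = 0 → V.valuation (∑ x, (n x : ℂ) * ω x) < 1)
    : V.valuation (p : ℂ) < 1 := by
  classical
  haveI : CharP F p := charP_of_injective_algebraMap (algebraMap (ZMod p) F).injective p
  have := T (fun x => if x = 1 then p else 0) (by
    simp [apply_ite])
  simpa [apply_ite] using this

lemma val_pi_lt (T : ∀ n : F → ℤ, ∑ x, (n x : F) * x = 0 → V.valuation (∑ x, (n x : ℂ) * ω x) < 1)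
    : V.valuation (1 - zetaP p) < 1 := by
  have h1 := val_p_lt p T
  rw [← val_pi_pow] at h1
  by_contra h
  exact absurd h1 (not_lt.mpr (one_le_pow₀ (not_lt.mp h)))

lemma mulChar_int (χ : MulChar F ℂ) (x : F) : IsIntegral ℤ (χ x) := by
  by_cases hx : x = 0
  · rw [hx, MulChar.map_zero]; exact isIntegral_zero
  · have h1 : χ x ^ (Fintype.card F - 1) = 1 := by
      rw [← map_pow, FiniteField.pow_card_sub_one_eq_one x hx, map_one]
    have hpos : 0 < Fintype.card F - 1 := by have := Fintype.one_lt_card (α := F); omega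
    exact IsIntegral.of_pow hpos (by rw [h1]; exact isIntegral_one)

lemma sum_trace : ∑ x : F, algebraMap (ZMod p) F (Algebra.trace (ZMod p) F x) * x⁻¹ = -1 := by
  classical
  simp only [FiniteField.algebraMap_trace_eq_sum_pow, Nat.card_zmod, Finset.sum_mul]
  rw [Finset.sum_comm]
  set n := Module.finrank (ZMod p) F
  have hn : 0 < n := Module.finrank_pos
  have hq : Fintype.card F = p ^ n := by
      rw [Module.card_eq_pow_finrank (K := ZMod p) (V := F), ZMod.card]
  rw [Finset.sum_eq_single 0]
  · have : ∀ x : F, x ^ p ^ 0 * x⁻¹ = 1 - if x = 0 then 1 else 0 := by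
      intro x
      by_cases hx : x = 0 <;> simp [hx]
    simp only [this]
    rw [Finset.sum_sub_distrib]
    simp
  · intro i hi hi0
    rw [Finset.mem_range] at hi
    have h2 : 1 < p ^ i := Nat.one_lt_pow hi0 hp.out.one_lt
    have h3 : p ^ i < p ^ n := Nat.pow_lt_pow_right hp.out.one_lt hi
    rw [← FiniteField.sum_pow_lt_card_sub_one F (p ^ i - 1) (by omega)]
    refine Finset.sum_congr rfl fun x _ => ?_
    by_cases hx : x = 0
    · rw [hx, inv_zero, mul_zero, zero_pow (by omega)]
    · rw [pow_sub₀ x hx h2.le, pow_one]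
  · intro h
    exact absurd (Finset.mem_range.mpr hn) h

lemma val_gauss_one (T : ∀ n : F → ℤ, ∑ x, (n x : F) * x = 0 → V.valuation (∑ x, (n x : ℂ) * ω x) < 1)
    (hω : ω⁻¹ ≠ 1) : V.valuation (gaussSum ω⁻¹ (psi p F)) = V.valuation (1 - zetaP p) := by
  classical
  set π := 1 - zetaP p with hπ
  have hπi : IsIntegral ℤ π := isIntegral_one.sub (zetaP_int p)
  have hπ1 : V.valuation π < 1 := val_pi_lt p T
  have hπ0 : V.valuation π ≠ 0 := by
    rw [Valuation.ne_zero_iff, hπ, sub_ne_zero]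
    exact ((zetaP_prim p).ne_one hp.out.one_lt).symm
  choose y hy hyt using one_sub_pow_expand π hπi
  set tr : F → ℕ := fun x => (Algebra.trace (ZMod p) F x).val with htr
  set S : ℂ := ∑ x : F, ω⁻¹ x * tr x with hS
  have hS1 : V.valuation (S + 1) < 1 := by
    have := T (fun x => tr x⁻¹ + if x = 1 then 1 else 0) (by
      have h1 := sum_trace (F := F) p
      rw [← Equiv.sum_comp (Equiv.inv F)] at h1
      simp only [Equiv.inv_apply, inv_inv] at h1
      push_cast
      simp only [add_mul, Finset.sum_add_distrib]
      have h2 : ∀ x : F, ((tr x : ℕ) : F) = algebraMap (ZMod p) F (Algebra.trace (ZMod p) F x) := by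
        intro x
        rw [htr, ← map_natCast (algebraMap (ZMod p) F), ZMod.natCast_zmod_val]
      simp only [h2, h1]
      simp)
    convert! this using 2
    push_cast
    simp only [add_mul, Finset.sum_add_distrib]
    rw [hS, ← Equiv.sum_comp (Equiv.inv F)]
    congr 1
    · refine Finset.sum_congr rfl fun x _ => ?_
      rw [Equiv.inv_apply, MulChar.inv_apply', inv_inv, mul_comm]
    · simp
  have hS2 : V.valuation S = 1 := by
    have h1 : V.valuation (S + 1 - 1) = V.valuation (1 : ℂ) := by
      rw [sub_eq_neg_add]
      rw [Valuation.map_add_eq_of_lt_left]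
      · simp
      · rw [Valuation.map_neg, map_one]; exact hS1
    simpa using h1
  have hG : gaussSum ω⁻¹ (psi p F) + π * S = π ^ 2 * ∑ x : F, ω⁻¹ x * y (tr x) := by
    have h0 := MulChar.sum_eq_zero_of_ne_one hω
    rw [gaussSum, hS, Finset.mul_sum, Finset.mul_sum, ← Finset.sum_add_distrib]
    rw [← sub_eq_zero, ← Finset.sum_sub_distrib, ← h0]
    refine Finset.sum_congr rfl fun x _ => ?_
    have h1 : psi p F x = 1 - tr x * π + π ^ 2 * y (tr x) := by
      rw [← hyt, psi_apply, hπ]; simp [htr]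
    rw [h1]; ring
  have h3 : V.valuation (gaussSum ω⁻¹ (psi p F) + π * S) < V.valuation (π * S) := by
    rw [hG, map_mul, map_mul, hS2, map_pow, mul_one]
    calc _ ≤ V.valuation π ^ 2 * 1 := by
            gcongr
            exact val_int V (IsIntegral.sum _ fun x _ => (mulChar_int _ x).mul (hy _))
      _ < _ := by
            rw [mul_one, pow_two]
            exact mul_lt_of_lt_one_right (zero_lt_iff.mpr hπ0) hπ1
  have h4 : gaussSum ω⁻¹ (psi p F) = (gaussSum ω⁻¹ (psi p F) + π * S) + -(π * S) := by ring
  rw [h4, Valuation.map_add_eq_of_lt_right _ (by rw [Valuation.map_neg]; exact h3), Valuation.map_neg,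
    map_mul, hS2, mul_one]

end
end IdxTwo

namespace IdxTwo
section

lemma digits (p N M f t : ℕ) (hp : 0 < p) (hN : N * M + 1 = p ^ f) (ht : t < N) :
    ∃ d : ℕ → ℕ, t * M = ∑ i ∈ Finset.range f, d i * p ^ (f - 1 - i) ∧
      N * ∑ i ∈ Finset.range f, d i = (p - 1) * ∑ i ∈ Finset.range f, (p ^ i * t % N) := by
  set r : ℕ → ℕ := fun i => p ^ i * t % N with hr
  have hr0 : r 0 = t := by simp [hr, Nat.mod_eq_of_lt ht]
  have hrf : r f = t := by
    simp only [hr]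
    rw [← hN, add_mul, one_mul, mul_assoc, Nat.mul_add_mod, Nat.mod_eq_of_lt ht]
  have hstep : ∀ i, N * (p * r i / N) + r (i + 1) = p * r i := by
    intro i
    have : r (i + 1) = (p * r i) % N := by
      simp only [hr]; rw [pow_succ']; simp [Nat.mul_mod, mul_assoc]
    rw [this, Nat.div_add_mod]
  refine ⟨fun i => p * r i / N, ?_, ?_⟩
  · have key : ∀ n, N * ∑ i ∈ Finset.range n, (p * r i / N) * p ^ (n - 1 - i) + r n = p ^ n * t := by
      intro n
      induction n with
      | zero => simp [hr0]
      | succ n ih =>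
        have h1 : ∑ i ∈ Finset.range (n + 1), (p * r i / N) * p ^ (n + 1 - 1 - i)
            = p * ∑ i ∈ Finset.range n, (p * r i / N) * p ^ (n - 1 - i) + p * r n / N := by
          rw [Finset.sum_range_succ, Finset.mul_sum]
          congr 1
          · refine Finset.sum_congr rfl fun i hi => ?_
            rw [Finset.mem_range] at hi
            rw [show n + 1 - 1 - i = (n - 1 - i) + 1 by omega, pow_succ]; ring
          · simp
        rw [h1, pow_succ', mul_assoc, ← ih]
        have := hstep n
        linear_combination this
    have h2 := key f
    rw [hrf, ← hN, add_mul, one_mul] at h2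
    have h3 := Nat.add_right_cancel h2
    rw [mul_assoc] at h3
    have h4 := Nat.eq_of_mul_eq_mul_left (by omega) h3
    rw [h4]; ring
  · have h1 : ∑ i ∈ Finset.range f, r (i + 1) = ∑ i ∈ Finset.range f, r i := by
      have h := Finset.sum_range_succ' r f
      rw [Finset.sum_range_succ, hrf, hr0] at h
      exact (Nat.add_right_cancel h).symm
    have h2 : N * ∑ i ∈ Finset.range f, (p * r i / N) + ∑ i ∈ Finset.range f, r (i + 1)
        = p * ∑ i ∈ Finset.range f, r i := by
      rw [Finset.mul_sum, Finset.mul_sum, ← Finset.sum_add_distrib]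
      exact Finset.sum_congr rfl fun i _ => hstep i
    rw [h1] at h2
    rw [Nat.sub_mul, one_mul]
    exact Nat.eq_sub_of_add_eq h2

variable (p : ℕ) [hp : Fact p.Prime] {F : Type} [Field F] [Fintype F] [Algebra (ZMod p) F]
  {V : ValuationSubring ℂ}

lemma psi_int (x : F) : IsIntegral ℤ (psi p F x) := by
  rw [psi_apply]; exact (zetaP_int p).pow _

lemma gauss_int (χ : MulChar F ℂ) : IsIntegral ℤ (gaussSum χ (psi p F)) :=
  IsIntegral.sum _ fun x _ => (mulChar_int χ x).mul (psi_int p x)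

lemma val_gauss_mul (χ φ : MulChar F ℂ) :
    V.valuation (gaussSum χ (psi p F)) * V.valuation (gaussSum φ (psi p F)) ≤
      V.valuation (gaussSum (χ * φ) (psi p F)) := by
  by_cases h : χ * φ = 1
  · rw [h, gauss_triv, Valuation.map_neg, map_one]
    exact mul_le_one' (val_int V (gauss_int p χ)) (val_int V (gauss_int p φ))
  · rw [← map_mul, ← jacobiSum_mul_nontrivial h, map_mul]
    refine mul_le_of_le_one_right' (val_int V ?_)
    exact IsIntegral.sum _ fun x _ => (mulChar_int χ x).mul (mulChar_int φ _)

lemma val_gauss_pow (χ : MulChar F ℂ) (n : ℕ) :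
    V.valuation (gaussSum χ (psi p F)) ^ n ≤ V.valuation (gaussSum (χ ^ n) (psi p F)) := by
  induction n with
  | zero => simp [gauss_triv]
  | succ n ih => 
    rw [pow_succ, pow_succ]
    exact (mul_le_mul_left ih _).trans (val_gauss_mul p _ _)

lemma val_gauss_sum (χ : MulChar F ℂ) (n : ℕ) (d e : ℕ → ℕ) :
    V.valuation (gaussSum χ (psi p F)) ^ (∑ i ∈ Finset.range n, d i) ≤
      V.valuation (gaussSum (χ ^ (∑ i ∈ Finset.range n, d i * p ^ (e i))) (psi p F)) := by
  induction n with
  | zero => simp [gauss_triv]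
  | succ n ih => 
    rw [Finset.sum_range_succ, Finset.sum_range_succ, pow_add, pow_add]
    refine le_trans (mul_le_mul' ih ?_) (val_gauss_mul p _ _)
    rw [mul_comm, pow_mul]
    refine le_trans ?_ (val_gauss_pow p _ _)
    rw [gauss_frob_pow]

lemma val_bound {ω : MulChar F ℂ}
    (T : ∀ n : F → ℤ, ∑ x, (n x : F) * x = 0 → V.valuation (∑ x, (n x : ℂ) * ω x) < 1)
    (hω : ω⁻¹ ≠ 1) (N M f t : ℕ) (hN : N * M + 1 = p ^ f) (ht : t < N) :
    V.valuation (p : ℂ) ^ (∑ i ∈ Finset.range f, (p ^ i * t % N)) ≤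
      V.valuation (gaussSum (ω⁻¹ ^ (t * M)) (psi p F)) ^ N := by
  obtain ⟨d, h1, h2⟩ := digits p N M f t hp.out.pos hN ht
  rw [← val_pi_pow, ← pow_mul, ← h2, h1, mul_comm, pow_mul, ← val_gauss_one p T hω]
  exact pow_le_pow_left' (val_gauss_sum p _ _ _ _) _

end
end IdxTwo

namespace IdxTwo
section
variable {p l r N f : ℕ} [hp : Fact p.Prime] [hl : Fact l.Prime]

lemma f_eq (hl4 : l % 4 = 3) (hr : 1 ≤ r) (hN : N = l ^ r) (hind : f = Nat.totient N / 2) :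
    f = l ^ (r - 1) * ((l - 1) / 2) ∧ Odd f ∧ 2 * f = Nat.totient N := by
  have h1 : Nat.totient N = l ^ (r - 1) * (l - 1) := by
    rw [hN, Nat.totient_prime_pow hl.out hr]
  obtain ⟨k, hk⟩ : ∃ k, l = 4 * k + 3 := ⟨l / 4, by omega⟩
  have h2 : l - 1 = 2 * (2 * k + 1) := by omega
  have h3 : (l - 1) / 2 = 2 * k + 1 := by omega
  have h4 : f = l ^ (r - 1) * (2 * k + 1) := by
    rw [hind, h1, h2]
    rw [show l ^ (r - 1) * (2 * (2 * k + 1)) = 2 * (l ^ (r - 1) * (2 * k + 1)) by ring]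
    omega
  refine ⟨by rw [h3, h4], ?_, ?_⟩
  · rw [h4]
    apply Odd.mul
    · apply Odd.pow; rw [Nat.odd_iff]; omega
    · exact ⟨k, rfl⟩
  · rw [h1, h2, h4]; ring

lemma p_not_one (hl4 : l % 4 = 3) (hl3 : 3 < l) (hr : 1 ≤ r) (hN : N = l ^ r)
    (hf : orderOf (p : ZMod N) = f) (hind : f = Nat.totient N / 2) : ¬ l ∣ p - 1 := by
  intro h
  have hp1 := hp.out.one_lt
  have hlZ : (l : ℤ) ∣ (p : ℤ) - 1 := by
    have : ((p - 1 : ℕ) : ℤ) = (p : ℤ) - 1 := by push_cast [hp1.le]; ring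
    rw [← this]; exact_mod_cast h
  have h1 := dvd_sub_pow_of_dvd_sub hlZ (r - 1)
  rw [one_pow, show r - 1 + 1 = r by omega] at h1
  have h2 : (p : ZMod N) ^ (l ^ (r - 1)) = 1 := by
    have h3 : (((p : ℤ) ^ l ^ (r - 1) - 1 : ℤ) : ZMod N) = 0 := by
      rw [ZMod.intCast_zmod_eq_zero_iff_dvd, hN]; exact_mod_cast h1
    push_cast at h3
    exact sub_eq_zero.mp h3
  have h3 := orderOf_dvd_of_pow_eq_one h2
  rw [hf] at h3
  have hpos : 0 < l ^ (r - 1) := pow_pos hl.out.pos _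
  have h4 := Nat.le_of_dvd hpos h3
  rw [(f_eq hl4 hr hN hind).1] at h4
  have h5 : 2 ≤ (l - 1) / 2 := by omega
  nlinarith

lemma qchar_p (hl4 : l % 4 = 3) (hr : 1 ≤ r) (hN : N = l ^ r)
    (hf : orderOf (p : ZMod N) = f) (hind : f = Nat.totient N / 2) :
    quadraticChar (ZMod l) (p : ZMod l) = 1 := by
  have hlN : l ∣ N := by rw [hN]; exact dvd_pow_self _ (by omega)
  have h1 : (p : ZMod l) ^ f = 1 := by
    have h2 := pow_orderOf_eq_one (p : ZMod N)
    rw [hf] at h2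
    have h3 := congrArg (ZMod.castHom hlN (ZMod l)) h2
    rwa [map_pow, map_natCast, map_one] at h3
  have h2 : quadraticChar (ZMod l) (p : ZMod l) ^ f = 1 := by rw [← map_pow, h1, map_one]
  have hodd := (f_eq hl4 hr hN hind).2.1
  have hp0 : (p : ZMod l) ≠ 0 := by
    intro h; rw [h, zero_pow hodd.pos.ne'] at h1; exact zero_ne_one h1
  rcases quadraticChar_dichotomy hp0 with h | h
  · exact h
  · rw [h, hodd.neg_one_pow] at h2; norm_num at h2

lemma unit_bij (hl4 : l % 4 = 3) (hr : 1 ≤ r) (hN : N = l ^ r) 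
    (hf : orderOf (p : ZMod N) = f) (hind : f = Nat.totient N / 2) (pu t : (ZMod N)ˣ) (hpu : (pu : ZMod N) = p) :
    Function.Bijective (fun x : Fin f × Bool => (if x.2 then 1 else -1) * (pu ^ (x.1 : ℕ) * t)) := by
  haveI : NeZero N := ⟨by rw [hN]; exact pow_ne_zero _ hl.out.ne_zero⟩
  obtain ⟨-, hodd, h2f⟩ := f_eq hl4 hr hN hind
  have hopu : orderOf pu = f := by rw [← hf, ← hpu, orderOf_units]
  have hne : (-1 : (ZMod N)ˣ) ≠ 1 := by
    have hN2 : 2 < N := by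
      rw [hN]
      calc 2 < l := by omega
        _ = l ^ 1 := (pow_one l).symm
        _ ≤ l ^ r := Nat.pow_le_pow_right hl.out.pos hr
    haveI : Fact (2 < N) := ⟨hN2⟩
    intro h
    exact ZMod.neg_one_ne_one (n := N) (by simpa using congrArg Units.val h)
  have hlem : ∀ i j : ℕ, -1 * (pu ^ i * t) ≠ pu ^ j * t := by
    intro i j h
    have h1 : -1 * pu ^ i = pu ^ j := by
      rw [← mul_assoc] at h; exact mul_right_cancel h
    have h2 := congrArg (fun x => x ^ f) h1
    simp only [mul_pow, ← pow_mul, hodd.neg_one_pow] at h2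
    rw [mul_comm i, mul_comm j, pow_mul, pow_mul, ← hopu, pow_orderOf_eq_one] at h2
    simp at h2
    exact hne h2
  have hinj : ∀ i j : Fin f, pu ^ (i : ℕ) * t = pu ^ (j : ℕ) * t → i = j := by
    intro i j h
    have h1 := mul_right_cancel h
    have := pow_injOn_Iio_orderOf (x := pu) (by simp [hopu]) (by simp [hopu]) h1
    exact Fin.ext this
  rw [Fintype.bijective_iff_injective_and_card]
  constructor
  · rintro ⟨i, b⟩ ⟨j, c⟩ h
    cases b <;> cases c <;> simp only [if_true, if_false, Bool.false_eq_true, one_mul] at h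
    · rw [hinj i j (mul_left_cancel h)]
    · exact absurd h (hlem _ _)
    · exact absurd h.symm (hlem _ _)
    · rw [hinj i j h]
  · rw [ZMod.card_units_eq_totient, ← h2f]; simp [mul_comm]

lemma unit_sum {A : Type*} [AddCommMonoid A] (hl4 : l % 4 = 3) (hr : 1 ≤ r) (hN : N = l ^ r) 
    (hf : orderOf (p : ZMod N) = f) (hind : f = Nat.totient N / 2) (pu t : (ZMod N)ˣ) (hpu : (pu : ZMod N) = p)
    [NeZero N] (g : ZMod N → A) :
    ∑ u : (ZMod N)ˣ, g u = ∑ i ∈ Finset.range f, (g (p ^ i * t) + g (-(p ^ i * t))) := by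
  rw [← (unit_bij hl4 hr hN hf hind pu t hpu).sum_comp, Fintype.sum_prod_type, Finset.sum_range]
  refine Finset.sum_congr rfl fun i _ => ?_
  rw [Fintype.sum_bool]
  simp [hpu]

lemma sum_range_mul_char (g : ℕ → ℤ) (hg : ∀ i j, g (l * i + j) = g j) (h0 : ∑ j ∈ Finset.range l, g j = 0) (k : ℕ) :
    ∑ i ∈ Finset.range (l * k), (i : ℤ) * g i = k * ∑ i ∈ Finset.range l, (i : ℤ) * g i := by
  induction k with
  | zero => simp
  | succ k ih =>
    rw [mul_add, mul_one, Finset.sum_range_add, ih]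
    have : ∑ x ∈ Finset.range l, ((l * k + x : ℕ) : ℤ) * g (l * k + x) =
        l * k * ∑ j ∈ Finset.range l, g j + ∑ i ∈ Finset.range l, (i : ℤ) * g i := by
      rw [Finset.mul_sum, ← Finset.sum_add_distrib]
      refine Finset.sum_congr rfl fun x _ => ?_
      rw [hg]; push_cast; ring
    rw [this, h0]; push_cast; ring

lemma zmod_sum_range {A : Type*} [AddCommMonoid A] (n : ℕ) [NeZero n] (g : ZMod n → A) :
    ∑ a : ZMod n, g a = ∑ i ∈ Finset.range n, g i := by
  symm
  apply Finset.sum_bij (fun (i : ℕ) _ => (i : ZMod n))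
  · simp
  · intro i hi j hj h
    rw [Finset.mem_range] at hi hj
    have := congrArg ZMod.val h
    rwa [ZMod.val_cast_of_lt hi, ZMod.val_cast_of_lt hj] at this
  · intro b _
    exact ⟨b.val, Finset.mem_range.mpr (ZMod.val_lt b), by simp⟩
  · simp

lemma sum_N (hl2 : l ≠ 2) (hr : 1 ≤ r) (hN : N = l ^ r) [NeZero N] (hlN : l ∣ N) :
    ∑ u : (ZMod N)ˣ, ((u : ZMod N).val : ℤ) * quadraticChar (ZMod l) (ZMod.castHom hlN (ZMod l) (u : ZMod N))
     = l ^ (r - 1) * ∑ a : ZMod l, (a.val : ℤ) * quadraticChar (ZMod l) a := by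
  rw [Fintype.sum_of_injective (fun u : (ZMod N)ˣ => (u : ZMod N)) Units.val_injective _
    (fun a : ZMod N => (a.val : ℤ) * quadraticChar (ZMod l) (ZMod.castHom hlN (ZMod l) a)) _ (fun _ => rfl)]
  · rw [zmod_sum_range, zmod_sum_range]
    have h1 : ∀ n (hn : l ∣ n) [NeZero n], ∑ i ∈ Finset.range n, (((i : ZMod n)).val : ℤ) * quadraticChar (ZMod l) (ZMod.castHom hn (ZMod l) (i : ZMod n))
        = ∑ i ∈ Finset.range n, (i : ℤ) * quadraticChar (ZMod l) (i : ZMod l) := by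
      intro n hn _
      refine Finset.sum_congr rfl fun i hi => ?_
      rw [Finset.mem_range] at hi
      rw [ZMod.val_cast_of_lt hi, map_natCast]
    rw [h1 N hlN]
    have h2 : N = l * l ^ (r - 1) := by rw [hN, ← pow_succ']; congr 1; omega
    rw [h2, sum_range_mul_char (fun i => quadraticChar (ZMod l) (i : ZMod l))]
    · push_cast
      congr 1
      refine Finset.sum_congr rfl fun i hi => ?_
      rw [Finset.mem_range] at hi
      rw [ZMod.val_cast_of_lt hi]
    · intro i j; simp
    · rw [← zmod_sum_range l (fun a => quadraticChar (ZMod l) a)]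
      apply quadraticChar_sum_zero
      rw [ZMod.ringChar_zmod_n]; exact hl2
  · intro a ha
    have : ZMod.castHom hlN (ZMod l) a = 0 := by
      by_contra h
      apply ha
      have hc : IsUnit a := by
        rw [← ZMod.natCast_zmod_val a] at h ⊢
        rw [map_natCast, ZMod.natCast_eq_zero_iff] at h
        rw [ZMod.isUnit_iff_coprime]
        generalize a.val = m at h ⊢
        rw [hN]
        exact ((Nat.Prime.coprime_iff_not_dvd hl.out).mpr h).symm.pow_right r
      exact ⟨hc.unit, rfl⟩
    rw [this]; simp

lemma B_eq (hl4 : l % 4 = 3) (hl3 : 3 < l) (hr : 1 ≤ r) (hN : N = l ^ r) 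
    (hf : orderOf (p : ZMod N) = f) (hind : f = Nat.totient N / 2) (pu t : (ZMod N)ˣ) (hpu : (pu : ZMod N) = p) :
    (∑ i ∈ Finset.range f, ((p ^ i * t : ZMod N).val : ℤ)) + (∑ i ∈ Finset.range f, ((-(p ^ i * t) : ZMod N).val : ℤ)) = N * f ∧
    |(∑ i ∈ Finset.range f, ((p ^ i * t : ZMod N).val : ℤ)) - (∑ i ∈ Finset.range f, ((-(p ^ i * t) : ZMod N).val : ℤ))| = N * classNumSqrtNeg l := by
  haveI : NeZero N := ⟨by rw [hN]; exact pow_ne_zero _ hl.out.ne_zero⟩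
  have hlN : l ∣ N := by rw [hN]; exact dvd_pow_self _ (by omega)
  have hN1 : 1 < N := by rw [hN]; exact Nat.one_lt_pow (by omega) hl.out.one_lt
  haveI : Fact (1 < N) := ⟨hN1⟩
  constructor
  · rw [← Finset.sum_add_distrib, mul_comm]
    rw [Finset.sum_congr rfl (g := fun _ => (N : ℤ))]
    · simp
    · intro i _
      have h0 : NeZero (p ^ i * t : ZMod N) := ⟨by
        rw [← hpu, ← Units.val_pow_eq_pow_val, ← Units.val_mul]; exact Units.ne_zero _⟩
      rw [ZMod.val_neg_of_ne_zero]
      have := ZMod.val_lt (p ^ i * t : ZMod N)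
      push_cast [this.le]; ring
  · have h1 := unit_sum hl4 hr hN hf hind pu t hpu (fun u : ZMod N => (u.val : ℤ) * quadraticChar (ZMod l) (ZMod.castHom hlN (ZMod l) u))
    rw [sum_N (by omega) hr hN hlN] at h1
    set e := quadraticChar (ZMod l) (ZMod.castHom hlN (ZMod l) (t : ZMod N)) with he
    have hp1 := qchar_p (p := p) hl4 hr hN hf hind
    have hm1 : quadraticChar (ZMod l) (-1) = -1 := by
      exact qchar_neg_one l hl4
    have h2 : ∀ i, quadraticChar (ZMod l) (ZMod.castHom hlN (ZMod l) (p ^ i * t : ZMod N)) = e := by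
      intro i
      rw [map_mul, map_mul, map_pow, map_natCast, map_pow, hp1, one_pow, one_mul]
    have h3 : ∀ i, quadraticChar (ZMod l) (ZMod.castHom hlN (ZMod l) (-(p ^ i * t) : ZMod N)) = -e := by
      intro i
      rw [map_neg, neg_eq_neg_one_mul, map_mul, hm1, h2]; ring
    simp only [h2, h3] at h1
    have h4 : (l : ℤ) ^ (r - 1) * ∑ a : ZMod l, (a.val : ℤ) * quadraticChar (ZMod l) a = e *
       ((∑ i ∈ Finset.range f, ((p ^ i * t : ZMod N).val : ℤ)) - (∑ i ∈ Finset.range f, ((-(p ^ i * t) : ZMod N).val : ℤ))) := by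
      rw [h1, ← Finset.sum_sub_distrib, Finset.mul_sum]
      refine Finset.sum_congr rfl fun x _ => ?_
      ring
    have h5 := congrArg abs h4
    rw [abs_mul, abs_mul, ← class_final l hl4 hl3] at h5
    have he1 : |e| = 1 := by
      have : ZMod.castHom hlN (ZMod l) (t : ZMod N) ≠ 0 := (t.isUnit.map (ZMod.castHom hlN (ZMod l))).ne_zero
      rcases quadraticChar_dichotomy this with h | h <;> rw [he, h] <;> simp
    rw [he1, one_mul, abs_of_nonneg (by positivity)] at h5
    rw [← h5, ← mul_assoc, ← pow_succ, show r - 1 + 1 = r by omega, hN]; push_cast; ring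

end
end IdxTwo

namespace IdxTwo
section
variable {p l r N f : ℕ} [hp : Fact p.Prime] [hl : Fact l.Prime]
 {F : Type} [Field F] [Fintype F] [Algebra (ZMod p) F]

lemma chi_neg_one (hN : Odd N) (χ : MulChar F ℂ) (h : χ ^ N = 1) : χ (-1) = 1 := by
  have h1 : χ (-1) ^ N = 1 := by
    rw [← MulChar.pow_apply' _ hN.pos.ne', h, MulChar.one_apply (by simp)]
  have h2 : χ (-1) ^ 2 = 1 := by
    rw [← map_pow]; simp
  obtain ⟨k, rfl⟩ := hN
  rw [pow_succ, pow_mul, h2, one_pow, one_mul] at h1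
  exact h1

lemma exists_t {ω χ : MulChar F ℂ} {q M : ℕ} (hω : orderOf ω = q - 1) (hq : N * M + 1 = q) (hM : 0 < M) (hN0 : 0 < N)
    (c : ℕ) (hχ : χ = ω⁻¹ ^ c) (ho : orderOf χ = N) :
    ∃ t, t ≤ N ∧ t.Coprime N ∧ χ = ω⁻¹ ^ (t * M) ∧ χ⁻¹ = ω⁻¹ ^ ((N - t) * M) := by
  have ho' : orderOf ω⁻¹ = N * M := by rw [orderOf_inv, hω]; omega
  have h1 : χ ^ N = 1 := by rw [← ho, pow_orderOf_eq_one]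
  have h2 : N * M ∣ c * N := by
    rw [← ho']; apply orderOf_dvd_of_pow_eq_one; rw [pow_mul, ← hχ, h1]
  have h3 : M ∣ c := by
    rw [mul_comm c] at h2; exact Nat.dvd_of_mul_dvd_mul_left hN0 h2
  obtain ⟨s, rfl⟩ := h3
  have hNM : ω⁻¹ ^ (N * M) = 1 := by rw [← ho', pow_orderOf_eq_one]
  have h4 : χ = ω⁻¹ ^ ((s % N) * M) := by
    rw [hχ]
    conv_lhs => rw [← Nat.div_add_mod s N]
    rw [mul_add, pow_add, show M * (N * (s / N)) = (N * M) * (s / N) by ring, pow_mul, hNM, one_pow, one_mul, mul_comm M]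
  have hlt := Nat.mod_lt s hN0
  refine ⟨s % N, hlt.le, ?_, h4, ?_⟩
  · generalize s % N = t at h4
    set d := Nat.gcd t N
    obtain ⟨t', ht'⟩ : d ∣ t := Nat.gcd_dvd_left t N
    obtain ⟨N', hN'⟩ : d ∣ N := Nat.gcd_dvd_right t N
    have h5 : χ ^ N' = 1 := by
      rw [h4, ← pow_mul, ht', show d * t' * M * N' = (d * N') * M * t' by ring, ← hN', pow_mul, hNM, one_pow]
    have h6 := orderOf_dvd_of_pow_eq_one h5
    rw [ho, hN'] at h6
    have hN'0 : 0 < N' := by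
      rcases Nat.eq_zero_or_pos N' with h | h
      · rw [h] at hN'; omega
      · exact h
    have h7 := Nat.le_of_dvd hN'0 h6
    have h8 : d ≤ 1 := by nlinarith
    have h9 : 0 < d := Nat.gcd_pos_of_pos_right _ hN0
    exact Nat.le_antisymm h8 h9
  · rw [inv_eq_iff_mul_eq_one, h4, ← pow_add, ← add_mul, Nat.add_sub_cancel' hlt.le, hNM]

lemma val_final (hl4 : l % 4 = 3) (hl3 : 3 < l) (hr : 1 ≤ r) (hN : N = l ^ r) 
    (hf : orderOf (p : ZMod N) = f) (hind : f = Nat.totient N / 2)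
    (hcard : Fintype.card F = p ^ f) (χ : MulChar F ℂ) (ho : orderOf χ = N) :
    classNumSqrtNeg l ≤ f ∧ ∃ V : ValuationSubring ℂ, V.valuation (p : ℂ) < 1 ∧
      V.valuation (gaussSum χ (psi p F)) ≤ V.valuation (p : ℂ) ^ ((f - classNumSqrtNeg l) / 2) ∧
      V.valuation (gaussSum χ⁻¹ (psi p F)) ≤ V.valuation (p : ℂ) ^ ((f - classNumSqrtNeg l) / 2) := by
  have hN1 : 1 < N := by rw [hN]; exact Nat.one_lt_pow (by omega) hl.out.one_lt
  haveI : NeZero N := ⟨by omega⟩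
  have hodd := (f_eq hl4 hr hN hind).2.1
  have hNodd : Odd N := by rw [hN]; apply Odd.pow; rw [Nat.odd_iff]; omega
  obtain ⟨V, ω, hω, hall, T⟩ := exists_teich F
  have hpf : (p : ZMod N) ^ f = 1 := by rw [← hf]; exact pow_orderOf_eq_one _
  have hpf2 : 2 ≤ p ^ f := by
    calc 2 ≤ p := hp.out.two_le
      _ = p ^ 1 := (pow_one p).symm
      _ ≤ p ^ f := Nat.pow_le_pow_right hp.out.pos hodd.pos
  obtain ⟨M, hM⟩ : N ∣ p ^ f - 1 := by
    rw [← ZMod.natCast_eq_zero_iff, Nat.cast_sub (by omega)]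
    push_cast; rw [hpf, sub_self]
  have hM1 : N * M + 1 = p ^ f := by omega
  have hM0 : 0 < M := by
    rcases Nat.eq_zero_or_pos M with h | h
    · rw [h] at hM1; omega
    · exact h
  rw [hcard] at hω
  obtain ⟨c, hc⟩ := hall χ
  obtain ⟨t, htN, htc, ht1, ht2⟩ := exists_t hω hM1 hM0 (by omega) c hc ho
  have hω1 : ω⁻¹ ≠ 1 := by
    intro h
    have h1 : orderOf ω⁻¹ = 1 := by rw [h, orderOf_one]
    rw [orderOf_inv, hω] at h1
    have : N * 1 ≤ N * M := Nat.mul_le_mul_left _ hM0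
    omega
  have ht0 : 0 < t := by
    rcases Nat.eq_zero_or_pos t with h | h
    · rw [h, Nat.coprime_zero_left] at htc; omega
    · exact h
  have htlt : t < N := by
    rcases htN.lt_or_eq with h | h
    · exact h
    · rw [h, Nat.coprime_self] at htc; omega
  have hpu : IsUnit (p : ZMod N) := IsUnit.of_pow_eq_one hpf hodd.pos.ne'
  set tu : (ZMod N)ˣ := ZMod.unitOfCoprime t htc with htu
  have htu' : (tu : ZMod N) = (t : ZMod N) := ZMod.coe_unitOfCoprime t htc
  obtain ⟨e1, e2⟩ := B_eq hl4 hl3 hr hN hf hind hpu.unit tu rfl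
  have b1 := val_bound p T hω1 N M f t hM1 htlt
  have b2 := val_bound p T hω1 N M f (N - t) hM1 (by omega)
  rw [← ht1] at b1
  rw [← ht2] at b2
  have s1 : ∑ i ∈ Finset.range f, ((p ^ i * tu : ZMod N).val : ℤ) = ((∑ i ∈ Finset.range f, (p ^ i * t % N) : ℕ) : ℤ) := by
    push_cast
    refine Finset.sum_congr rfl fun i _ => ?_
    rw [htu', show (p ^ i * t : ZMod N) = ((p ^ i * t : ℕ) : ZMod N) by push_cast; rfl, ZMod.val_natCast]
    push_cast; rfl
  have s2 : ∑ i ∈ Finset.range f, ((-(p ^ i * tu) : ZMod N).val : ℤ) = ((∑ i ∈ Finset.range f, (p ^ i * (N - t) % N) : ℕ) : ℤ) := by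
    push_cast
    refine Finset.sum_congr rfl fun i _ => ?_
    rw [htu', show (-(p ^ i * t) : ZMod N) = ((p ^ i * (N - t) : ℕ) : ZMod N) by push_cast [htN]; simp, ZMod.val_natCast]
    push_cast; rfl
  rw [s1, s2] at e1 e2
  set a := ∑ i ∈ Finset.range f, (p ^ i * t % N)
  set b := ∑ i ∈ Finset.range f, (p ^ i * (N - t) % N)
  set h := classNumSqrtNeg l
  have hho : Odd h := class_odd l hl4 hl3
  have hNpos : (0 : ℤ) < N := by exact_mod_cast (by omega : 0 < N)
  have hle : h ≤ f := by
    have h1 : (N : ℤ) * h ≤ N * f := by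
      rw [← e1, ← e2, abs_le]; constructor <;> omega
    exact_mod_cast le_of_mul_le_mul_left h1 hNpos
  refine ⟨hle, V, val_p_lt p T, ?_⟩
  obtain ⟨m, hm⟩ : ∃ m, f - h = 2 * m := by
    have := Nat.Odd.sub_odd hodd hho
    exact even_iff_two_dvd.mp this
  have hm2 : (f - h) / 2 = m := by omega
  have hfm : (f : ℤ) = h + 2 * m := by omega
  rw [hm2]
  have ha : m * N ≤ a ∧ m * N ≤ b := by
    have h1 := le_abs_self ((a : ℤ) - b)
    have h2 := neg_abs_le ((a : ℤ) - b)
    rw [e2] at h1 h2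
    rw [hfm] at e1
    constructor <;> zify <;> nlinarith
  have e1' : a + b = N * f := by exact_mod_cast e1
  have hχ1 : χ ≠ 1 := by
    intro h; rw [h, orderOf_one] at ho; omega
  have hxy := gauss_inv p χ hχ1 (chi_neg_one hNodd χ (by rw [← ho, pow_orderOf_eq_one]))
  have hxy := congrArg V.valuation hxy
  rw [hcard] at hxy
  push_cast at hxy
  rw [map_mul, map_pow] at hxy
  have hP1 := val_p_lt p T
  have hP0 : 0 < V.valuation (p : ℂ) := by
    rw [zero_lt_iff, Valuation.ne_zero_iff]; exact_mod_cast hp.out.ne_zero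
  set x := V.valuation (gaussSum χ (psi p F))
  set y := V.valuation (gaussSum χ⁻¹ (psi p F))
  set P := V.valuation (p : ℂ)
  have hprod : x ^ N * y ^ N = P ^ a * P ^ b := by
    rw [← mul_pow, hxy, ← pow_mul, ← pow_add, e1', mul_comm]
  have hx : x ^ N ≤ P ^ a := by
    have : x ^ N * P ^ b ≤ P ^ a * P ^ b := by
      rw [← hprod]; exact mul_le_mul_right b2 _
    exact le_of_mul_le_mul_right this (pow_pos hP0 _)
  have hy : y ^ N ≤ P ^ b := by
    have : P ^ a * y ^ N ≤ P ^ a * P ^ b := by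
      rw [← hprod]; exact mul_le_mul_left b1 _
    exact le_of_mul_le_mul_left this (pow_pos hP0 _)
  have hN0 : N ≠ 0 := by omega
  constructor
  · rw [← pow_le_pow_iff_left₀ zero_le zero_le hN0, ← pow_mul]
    exact hx.trans (pow_le_pow_right_of_le_one' hP1.le ha.1)
  · rw [← pow_le_pow_iff_left₀ zero_le zero_le hN0, ← pow_mul]
    exact hy.trans (pow_le_pow_right_of_le_one' hP1.le ha.2)

end
end IdxTwo

namespace IdxTwo

lemma rat_of_fixed {n : ℕ} (hn : 0 < n) {ζ : ℂ} (hζ : IsPrimitiveRoot ζ n) (P : ℚ[X])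
    (h : ∀ c : ℕ, c.Coprime n → aeval (ζ ^ c) P = aeval ζ P) : ∃ q : ℚ, aeval ζ P = (q : ℂ) := by
  haveI : NeZero n := ⟨hn.ne'⟩
  have hint : IsIntegral ℚ ζ := (hζ.isIntegral hn).tower_top
  haveI : FiniteDimensional ℚ ℚ⟮ζ⟯ := IntermediateField.adjoin.finiteDimensional hint
  set g : ℚ⟮ζ⟯ := AdjoinSimple.gen ℚ ζ with hg
  have hgv : algebraMap ℚ⟮ζ⟯ ℂ g = ζ := AdjoinSimple.algebraMap_gen ℚ ζ
  have hgp : IsPrimitiveRoot g n := by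
    apply IsPrimitiveRoot.of_map_of_injective (f := algebraMap ℚ⟮ζ⟯ ℂ) (hf := (algebraMap ℚ⟮ζ⟯ ℂ).injective)
    rw [hgv]; exact hζ
  have key : ∀ σ : ℚ⟮ζ⟯ →ₐ[ℚ] ℂ, σ (aeval g P) = aeval ζ P := by
    intro σ
    have h1 : IsPrimitiveRoot (σ g) n := hgp.map_of_injective (f := σ) σ.toRingHom.injective
    obtain ⟨c, hc, hcn, hc'⟩ := hζ.isPrimitiveRoot_iff.1 h1
    rw [← aeval_algHom_apply, ← hc', h c hcn]
  have ht := trace_eq_sum_embeddings (K := ℚ) (L := ℚ⟮ζ⟯) ℂ (x := aeval g P)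
  rw [Finset.sum_congr rfl (fun σ _ => key σ), Finset.sum_const, nsmul_eq_mul] at ht
  have hcard : (Finset.univ : Finset (ℚ⟮ζ⟯ →ₐ[ℚ] ℂ)).card ≠ 0 := by
    apply Finset.card_ne_zero_of_mem (Finset.mem_univ (IntermediateField.val _))
  refine ⟨Algebra.trace ℚ ℚ⟮ζ⟯ (aeval g P) / ((Finset.univ : Finset (ℚ⟮ζ⟯ →ₐ[ℚ] ℂ)).card : ℚ), ?_⟩
  push_cast
  rw [eq_div_iff (by exact_mod_cast hcard), mul_comm, ← ht]
  simp

lemma int_of_rat {x : ℂ} (q : ℚ) (hq : x = q) (hx : IsIntegral ℤ x) : ∃ a : ℤ, x = a := by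
  have : IsIntegral ℤ q := by
    rw [hq] at hx
    exact (isIntegral_algebraMap_iff (algebraMap ℚ ℂ).injective).1 (by simpa using hx)
  obtain ⟨a, ha⟩ := IsIntegrallyClosed.isIntegral_iff.1 this
  exact ⟨a, by rw [hq, ← ha]; simp⟩

section
variable {p l r N f : ℕ} [hp : Fact p.Prime] [hl : Fact l.Prime] {F : Type} [Field F] [Fintype F] [Algebra (ZMod p) F]

lemma gpoly {ζ : ℂ} (hN0 : 0 < N) (hζ : IsPrimitiveRoot ζ (N * p)) (hz : ζ ^ N = zetaP p) (χ : MulChar F ℂ)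
    (hχ : χ ^ N = 1) :
    ∃ P : ℚ[X], ∀ c : ℕ, aeval (ζ ^ c) P = ∑ x, (χ ^ c) x * psi p F x ^ c := by
  classical
  have hr : IsPrimitiveRoot (ζ ^ p) N := hζ.pow (Nat.mul_pos hN0 hp.out.pos) (mul_comm _ _)
  have : ∀ x : F, ∃ j : ℕ, x ≠ 0 → χ x = (ζ ^ p) ^ j := by
    intro x
    by_cases hx : x = 0
    · exact ⟨0, fun h => absurd hx h⟩
    · have h1 : χ x ^ N = 1 := by
        rw [← MulChar.pow_apply' _ hN0.ne', hχ, MulChar.one_apply (by simpa using hx)]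
      haveI : NeZero N := ⟨hN0.ne'⟩
      obtain ⟨i, -, hi⟩ := hr.eq_pow_of_pow_eq_one h1
      exact ⟨i, fun _ => hi.symm⟩
  choose j hj using this
  refine ⟨∑ x : F, if x = 0 then 0 else X ^ (p * j x + N * (Algebra.trace (ZMod p) F x).val), fun c => ?_⟩
  rw [map_sum]
  refine Finset.sum_congr rfl fun x _ => ?_
  by_cases hx : x = 0
  · rw [if_pos hx, hx, MulChar.map_zero]; simp
  · rw [if_neg hx, map_pow, aeval_X, psi_apply, ← hz]
    have : (χ ^ c) x = χ x ^ c := by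
      exact MulChar.pow_apply_coe χ c (Units.mk0 x hx)
    rw [this, hj x hx]; ring

lemma chi_triv (hl4 : l % 4 = 3) (hl3 : 3 < l) (hr : 1 ≤ r) (hN : N = l ^ r)
    (hf : orderOf (p : ZMod N) = f) (hind : f = Nat.totient N / 2) (χ : MulChar F ℂ)
    (hχ : χ ^ N = 1) (c : ZMod p) (hc : c ≠ 0) : χ (algebraMap (ZMod p) F c) = 1 := by
  have hN0 : N ≠ 0 := by rw [hN]; exact pow_ne_zero _ hl.out.ne_zero
  have hx : algebraMap (ZMod p) F c ≠ 0 := by simpa using hc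
  have h1 : χ (algebraMap (ZMod p) F c) ^ N = 1 := by
    rw [← MulChar.pow_apply' _ hN0, hχ, MulChar.one_apply (by simpa using hx)]
  have h2 : χ (algebraMap (ZMod p) F c) ^ (p - 1) = 1 := by
    rw [← map_pow, ← map_pow, ZMod.pow_card_sub_one_eq_one hc]; simp
  have hcop : Nat.Coprime N (p - 1) := by
    rw [hN]; exact Nat.Coprime.pow_left _ ((Nat.Prime.coprime_iff_not_dvd hl.out).2 (p_not_one hl4 hl3 hr hN hf hind))
  have := (pow_gcd_eq_one).2 ⟨h1, h2⟩
  rw [hcop] at this; simpa using this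

lemma gcase (hl4 : l % 4 = 3) (hr : 1 ≤ r) (hN : N = l ^ r)
    (hf : orderOf (p : ZMod N) = f) (hind : f = Nat.totient N / 2) (hNp : N.Coprime p) (χ : MulChar F ℂ)
    (hχ : χ ^ N = 1) (c : ℕ) (hc : c.Coprime N) :
    (gaussSum (χ ^ c) (psi p F) = gaussSum χ (psi p F) ∧ gaussSum (χ⁻¹ ^ c) (psi p F) = gaussSum χ⁻¹ (psi p F)
      ∧ quadraticChar (ZMod l) (c : ZMod l) = 1) ∨
    (gaussSum (χ ^ c) (psi p F) = gaussSum χ⁻¹ (psi p F) ∧ gaussSum (χ⁻¹ ^ c) (psi p F) = gaussSum χ (psi p F)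
      ∧ quadraticChar (ZMod l) (c : ZMod l) = -1) := by
  have hlN : l ∣ N := by rw [hN]; exact dvd_pow_self _ (by omega)
  obtain ⟨⟨i, b⟩, hi⟩ := (unit_bij hl4 hr hN hf hind (ZMod.unitOfCoprime p hNp.symm) 1 (by simp)).2 (ZMod.unitOfCoprime c hc)
  have hi' := congrArg (fun u : (ZMod N)ˣ => (u : ZMod N)) hi
  have hq := qchar_p hl4 hr hN hf hind
  cases b
  · right
    simp only [Bool.false_eq_true, if_false, mul_one, ZMod.coe_unitOfCoprime, neg_mul, one_mul, Units.val_neg, Units.val_pow_eq_pow_val] at hi'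
    have hi2 : ((c + p ^ (i:ℕ) : ℕ) : ZMod N) = 0 := by push_cast; rw [← hi']; ring
    rw [ZMod.natCast_eq_zero_iff] at hi2
    have key : ∀ χ : MulChar F ℂ, χ ^ N = 1 → gaussSum (χ ^ c) (psi p F) = gaussSum χ⁻¹ (psi p F) := by
      intro χ hχ
      have : χ ^ c = χ⁻¹ ^ (p ^ (i:ℕ)) := by
        have h3 : χ ^ (c + p ^ (i:ℕ)) = 1 := by
          obtain ⟨k, hk⟩ := hi2
          rw [hk, pow_mul, hχ, one_pow]
        rw [inv_pow, eq_inv_iff_mul_eq_one, ← pow_add, h3]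
      rw [this, gauss_frob_pow]
    refine ⟨key χ hχ, ?_, ?_⟩
    · rw [key χ⁻¹ (by rw [inv_pow, hχ, inv_one]), inv_inv]
    · have h4 : ((c + p ^ (i:ℕ) : ℕ) : ZMod l) = 0 := (ZMod.natCast_eq_zero_iff _ _).2 (hlN.trans hi2)
      have : (c : ZMod l) = -1 * (p : ZMod l) ^ (i:ℕ) := by
        push_cast at h4; linear_combination h4
      rw [this, map_mul, map_pow, hq, qchar_neg_one l hl4]; simp
  · left
    simp only [if_true, mul_one, ZMod.coe_unitOfCoprime, one_mul, Units.val_pow_eq_pow_val] at hi'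
    have hi2 : ((p ^ (i:ℕ) : ℕ) : ZMod N) = (c : ℕ) := by push_cast; exact hi'
    rw [ZMod.natCast_eq_natCast_iff] at hi2
    have key : ∀ χ : MulChar F ℂ, χ ^ N = 1 → gaussSum (χ ^ c) (psi p F) = gaussSum χ (psi p F) := by
      intro χ hχ
      have : χ ^ c = χ ^ (p ^ (i:ℕ)) := by
        rw [pow_eq_pow_iff_modEq]
        exact (hi2.of_dvd (orderOf_dvd_of_pow_eq_one hχ)).symm
      rw [this, gauss_frob_pow]
    refine ⟨key χ hχ, key _ (by rw [inv_pow, hχ, inv_one]), ?_⟩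
    have h4 : ((p ^ (i:ℕ) : ℕ) : ZMod l) = (c : ℕ) := (ZMod.natCast_eq_natCast_iff _ _ _).2 (hi2.of_dvd hlN)
    rw [← h4]; push_cast; rw [map_pow, hq, one_pow]
end

lemma lpoly {l M : ℕ} [hl : Fact l.Prime] (hl4 : l % 4 = 3) {ζ : ℂ} (h : IsPrimitiveRoot (ζ ^ M) l) :
    ∃ (Q : ℚ[X]), (aeval ζ Q) ^ 2 = -(l : ℂ) ∧ ∀ c : ℕ, c.Coprime l →
      aeval (ζ ^ c) Q = (quadraticChar (ZMod l) (c : ZMod l) : ℂ) * aeval ζ Q := by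
  set η : MulChar (ZMod l) ℂ := (quadraticChar (ZMod l)).ringHomComp (Int.castRingHom ℂ) with hη
  set ψ : AddChar (ZMod l) ℂ := AddChar.zmodChar l h.pow_eq_one with hψ
  have hψp : ψ.IsPrimitive := AddChar.zmodChar_primitive_of_primitive_root l h
  have h2 : ringChar (ZMod l) ≠ 2 := by
    rw [ZMod.ringChar_zmod_n]; omega
  have hη1 : η ≠ 1 := by
    intro he
    have := congrArg (fun χ : MulChar (ZMod l) ℂ => χ (-1)) he
    simp only [hη, MulChar.ringHomComp_apply, qchar_neg_one l hl4, MulChar.one_apply (show IsUnit (-1 : ZMod l) by simp)] at this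
    norm_num at this
  have hη2 : η.IsQuadratic := (quadraticChar_isQuadratic (ZMod l)).comp _
  have hsq := gaussSum_sq hη1 hη2 hψp
  refine ⟨∑ a : ZMod l, C ((quadraticChar (ZMod l) a : ℤ) : ℚ) * X ^ (M * a.val), ?_, ?_⟩
  all_goals
    have h0 : ∀ c : ℕ, aeval (ζ ^ c) (∑ a : ZMod l, C ((quadraticChar (ZMod l) a : ℤ) : ℚ) * X ^ (M * a.val)) =
        gaussSum η (ψ.mulShift (c : ZMod l)) := by
      intro c
      rw [map_sum, gaussSum]
      refine Finset.sum_congr rfl fun a _ => ?_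
      rw [AddChar.mulShift_apply]
      have : ψ ((c : ZMod l) * a) = (ζ ^ M) ^ (c * a.val) := by
        have e : (c : ZMod l) * a = c • a := by simp
        rw [e, AddChar.map_nsmul_eq_pow, hψ, AddChar.zmodChar_apply]; ring
      rw [this]
      simp [hη, MulChar.ringHomComp_apply]
      left; ring
  · have := h0 1
    rw [pow_one] at this
    rw [this]; simp only [Nat.cast_one, AddChar.mulShift_one]
    rw [hsq, hη, MulChar.ringHomComp_apply, qchar_neg_one l hl4, ZMod.card]; simp
  · intro c hc
    have h1 := h0 1
    rw [pow_one] at h1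
    rw [h0 c, h1]
    simp only [Nat.cast_one, AddChar.mulShift_one]
    have := gaussSum_mulShift η ψ (ZMod.unitOfCoprime c hc)
    rw [ZMod.coe_unitOfCoprime] at this
    rw [← this, ← mul_assoc]
    have : ((quadraticChar (ZMod l) (c : ZMod l) : ℤ) : ℂ) * η (c : ZMod l) = 1 := by
      simp only [hη, MulChar.ringHomComp_apply, eq_intCast]
      rw [← sq]
      have hcz : (c : ZMod l) ≠ 0 := by
        intro h'; rw [ZMod.natCast_eq_zero_iff] at h'
        exact (Nat.Prime.coprime_iff_not_dvd hl.out).1 hc.symm h'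
      exact_mod_cast quadraticChar_sq_one hcz
    rw [this, one_mul]
end IdxTwo

namespace IdxTwo

lemma intCast_int (n : ℤ) : IsIntegral ℤ (n : ℂ) := by
  have := isIntegral_algebraMap (R := ℤ) (A := ℂ) (x := n)
  simpa using this

lemma dvd_of_val_lt (V : ValuationSubring ℂ) {p : ℕ} (hp : p.Prime) (hv : V.valuation (p : ℂ) < 1) (n : ℤ)
    (h : V.valuation (n : ℂ) < 1) : (p : ℤ) ∣ n := by
  by_contra hd
  have hc : IsCoprime (p : ℤ) n := by
    rw [Prime.coprime_iff_not_dvd (Nat.prime_iff_prime_int.1 hp)]; exact hd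
  obtain ⟨u, w, huw⟩ := hc
  have h1 : V.valuation ((u : ℂ) * p + w * n) < 1 := by
    apply Valuation.map_add_lt
    · rw [map_mul]; exact mul_lt_one_of_nonneg_of_lt_one_right (val_int V (intCast_int u)) zero_le hv
    · rw [map_mul]; exact mul_lt_one_of_nonneg_of_lt_one_right (val_int V (intCast_int w)) zero_le h
  have h2 : (u : ℂ) * p + w * n = 1 := by exact_mod_cast huw
  rw [h2, map_one] at h1
  exact lt_irrefl _ h1

lemma dvd_of_val_le (V : ValuationSubring ℂ) {p : ℕ} (hp : p.Prime) (hv : V.valuation (p : ℂ) < 1) (m : ℕ) :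
    ∀ n : ℤ, V.valuation (n : ℂ) ≤ V.valuation (p : ℂ) ^ m → (p : ℤ) ^ m ∣ n := by
  have hv0 : 0 < V.valuation (p : ℂ) := by
    rw [zero_lt_iff, Valuation.ne_zero_iff]; exact_mod_cast hp.ne_zero
  induction m with
  | zero => intro n _; simp
  | succ m ih =>
    intro n hn
    have h1 : (p : ℤ) ∣ n := by
      apply dvd_of_val_lt V hp hv
      refine hn.trans_lt ?_
      exact pow_lt_one₀ zero_le hv (by omega)
    obtain ⟨k, rfl⟩ := h1
    rw [pow_succ']
    apply mul_dvd_mul_left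
    apply ih
    push_cast at hn
    rw [map_mul, pow_succ'] at hn
    exact le_of_mul_le_mul_left hn hv0

lemma exists_val (l : ℕ) [hl : Fact l.Prime] : ∃ V : ValuationSubring ℂ, V.valuation (l : ℂ) < 1 := by
  obtain ⟨V, ω, -, -, T⟩ := exists_teich (ZMod l)
  exact ⟨V, val_p_lt l T⟩

lemma root_val (V : ValuationSubring ℂ) {l r : ℕ} (hl : l.Prime) (hv : V.valuation (l : ℂ) < 1) (y : ℂ)
    (hy : y ^ l ^ r = 1) : V.valuation (y - 1) < 1 := by
  have hyi : IsIntegral ℤ y := by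
    refine IsIntegral.of_pow (pow_pos hl.pos r) ?_
    rw [hy]; exact isIntegral_one
  have hyV : y ∈ V := (V.valuation_le_one_iff y).1 (val_int V hyi)
  obtain ⟨s, hs⟩ := exists_add_pow_prime_pow_eq hl ((⟨y, hyV⟩ : V) - 1) 1 r
  have hs' := congrArg (fun z : V => (z : ℂ)) hs
  simp only [sub_add_cancel] at hs'
  push_cast at hs'
  rw [hy, one_pow] at hs'
  have e : (y - 1) ^ l ^ r = -((l : ℂ) * ((y - 1) * 1 * s)) := by linear_combination -hs'
  have h2 : V.valuation (y - 1) ^ l ^ r < 1 := by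
    rw [← map_pow, e, Valuation.map_neg, map_mul]
    refine mul_lt_one_of_nonneg_of_lt_one_left zero_le hv ?_
    rw [ValuationSubring.valuation_le_one_iff]
    exact V.mul_mem _ _ (V.mul_mem _ _ (sub_mem hyV V.one_mem) V.one_mem) s.2
  by_contra h
  exact absurd h2 (not_lt.2 (one_le_pow₀ (not_lt.1 h)))

section
variable {p l r N f : ℕ} [hp : Fact p.Prime] [hl : Fact l.Prime] {F : Type} [Field F] [Fintype F] [Algebra (ZMod p) F]

lemma gauss_cong (V : ValuationSubring ℂ) (hv : V.valuation (l : ℂ) < 1) (hN : N = l ^ r) (χ : MulChar F ℂ)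
    (hχ : χ ^ N = 1) : V.valuation (gaussSum χ (psi p F) + 1) < 1 := by
  have h : gaussSum χ (psi p F) + 1 = ∑ x, (χ x - (1 : MulChar F ℂ) x) * psi p F x := by
    simp only [sub_mul, Finset.sum_sub_distrib]
    have := gauss_triv p (F := F)
    rw [gaussSum] at this
    rw [this, gaussSum]; ring
  have hN0 : N ≠ 0 := by rw [hN]; exact pow_ne_zero _ hl.out.ne_zero
  rw [h]
  apply Valuation.map_sum_lt _ one_ne_zero
  intro x _
  rw [map_mul]
  refine mul_lt_one_of_nonneg_of_lt_one_left zero_le ?_ (val_int V (psi_int p x))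
  by_cases hx : x = 0
  · rw [hx]; simp [MulChar.map_zero]
  · rw [MulChar.one_apply (by simpa using hx)]
    apply root_val V hl.out hv (r := r)
    rw [← hN, ← MulChar.pow_apply' _ hN0, hχ, MulChar.one_apply (by simpa using hx)]

lemma gauss_AB (hl4 : l % 4 = 3) (hl3 : 3 < l) (hr : 1 ≤ r) (hN : N = l ^ r) (hNp : N.Coprime p)
    (hf : orderOf (p : ZMod N) = f) (hind : f = Nat.totient N / 2)
    (hcard : Fintype.card F = p ^ f) (χ : MulChar F ℂ) (ho : orderOf χ = N) :
    ∃ A B : ℤ, gaussSum χ (psi p F) + gaussSum χ⁻¹ (psi p F) = A ∧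
      gaussSum χ (psi p F) - gaussSum χ⁻¹ (psi p F) = B * sqrtNeg l ∧ A ^ 2 + l * B ^ 2 = 4 * (p : ℤ) ^ f := by
  have hN1 : 1 < N := by rw [hN]; exact Nat.one_lt_pow (by omega) hl.out.one_lt
  have hNodd : Odd N := by rw [hN]; apply Odd.pow; rw [Nat.odd_iff]; omega
  have hχ : χ ^ N = 1 := by rw [← ho, pow_orderOf_eq_one]
  have hχ' : χ⁻¹ ^ N = 1 := by rw [inv_pow, hχ, inv_one]
  have hχ1 : χ ≠ 1 := by
    intro h; rw [h, orderOf_one] at ho; omega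
  have hlN : l ∣ N := by rw [hN]; exact dvd_pow_self _ (by omega)
  have hn : 0 < N * p := Nat.mul_pos (by omega) hp.out.pos
  set ζ : ℂ := Complex.exp (2 * Real.pi * Complex.I / ((N * p : ℕ) : ℂ)) with hζdef
  have hζ : IsPrimitiveRoot ζ (N * p) := Complex.isPrimitiveRoot_exp _ hn.ne'
  have hNC : (N : ℂ) ≠ 0 := by exact_mod_cast (show N ≠ 0 by omega)
  have hpC : (p : ℂ) ≠ 0 := by exact_mod_cast hp.out.ne_zero
  have hz : ζ ^ N = zetaP p := by
    rw [hζdef, ← Complex.exp_nat_mul, zetaP]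
    congr 1
    push_cast
    field_simp
  obtain ⟨P, hP⟩ := gpoly (by omega) hζ hz χ hχ
  obtain ⟨P', hP'⟩ := gpoly (by omega) hζ hz χ⁻¹ hχ'
  have hM : N * p = (p * l ^ (r - 1)) * l := by
    rw [hN, mul_assoc, ← pow_succ, Nat.sub_add_cancel hr, mul_comm]
  obtain ⟨Q, hQ2, hQ⟩ := lpoly (l := l) hl4 (hζ.pow hn hM)
  have hc1 : ∀ (χ : MulChar F ℂ), χ ^ N = 1 → ∀ c : ℕ, c.Coprime (N * p) →
      ∑ x, (χ ^ c) x * psi p F x ^ c = gaussSum (χ ^ c) (psi p F) := by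
    intro χ hχ c hc
    apply gauss_scale p _ _ c (Nat.Coprime.coprime_mul_left_right hc)
    intro d hd
    refine chi_triv hl4 hl3 hr hN hf hind _ ?_ d hd
    rw [← pow_mul, mul_comm, pow_mul, hχ, one_pow]
  have hPc : ∀ c : ℕ, c.Coprime (N * p) → aeval (ζ ^ c) P = gaussSum (χ ^ c) (psi p F) := by
    intro c hc; rw [hP, hc1 χ hχ c hc]
  have hPc' : ∀ c : ℕ, c.Coprime (N * p) → aeval (ζ ^ c) P' = gaussSum (χ⁻¹ ^ c) (psi p F) := by
    intro c hc; rw [hP', hc1 _ hχ' c hc]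
  have hP1 : aeval ζ P = gaussSum χ (psi p F) := by
    have := hPc 1 (by simp); simpa using this
  have hP1' : aeval ζ P' = gaussSum χ⁻¹ (psi p F) := by
    have := hPc' 1 (by simp); rwa [pow_one, pow_one] at this
  obtain ⟨qA, hqA⟩ := rat_of_fixed hn hζ (P + P') (by
    intro c hc
    simp only [map_add]
    rw [hPc c hc, hPc' c hc, hP1, hP1']
    rcases gcase hl4 hr hN hf hind hNp χ hχ c (Nat.Coprime.coprime_mul_right_right hc) with ⟨h1, h2, -⟩ | ⟨h1, h2, -⟩
    · rw [h1, h2]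
    · rw [h1, h2, add_comm])
  obtain ⟨qB, hqB⟩ := rat_of_fixed hn hζ ((P - P') * Q) (by
    intro c hc
    have hcN : c.Coprime N := Nat.Coprime.coprime_mul_right_right hc
    have hcl : c.Coprime l := Nat.Coprime.coprime_dvd_right hlN hcN
    simp only [map_mul, map_sub]
    rw [hPc c hc, hPc' c hc, hP1, hP1', hQ c hcl]
    rcases gcase hl4 hr hN hf hind hNp χ hχ c hcN with ⟨h1, h2, h3⟩ | ⟨h1, h2, h3⟩
    · rw [h1, h2, h3]; push_cast; ring
    · rw [h1, h2, h3]; push_cast; ring)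
  rw [map_add, hP1, hP1'] at hqA
  rw [map_mul, map_sub, hP1, hP1'] at hqB
  set G := gaussSum χ (psi p F) with hG
  set G' := gaussSum χ⁻¹ (psi p F) with hG'
  have hGG : G * G' = (p : ℂ) ^ f := by
    rw [gauss_inv p χ hχ1 (chi_neg_one hNodd χ hχ), hcard]; push_cast; rfl
  obtain ⟨A, hA⟩ := int_of_rat qA hqA ((gauss_int p χ).add (gauss_int p χ⁻¹))
  have hl0 : (l : ℂ) ≠ 0 := by exact_mod_cast hl.out.ne_zero
  have hs2 := sqrtNeg_sq l
  have hs0 : sqrtNeg l ≠ 0 := by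
    intro h; rw [h] at hs2; apply hl0; linear_combination hs2
  have hQs : ∃ y : ℚ, G - G' = y * sqrtNeg l := by
    have : (aeval ζ Q) ^ 2 = sqrtNeg l ^ 2 := by rw [hQ2, hs2]
    rcases sq_eq_sq_iff_eq_or_eq_neg.1 this with h | h
    · refine ⟨-qB / l, ?_⟩
      rw [h] at hqB
      push_cast
      rw [← hqB]
      field_simp
      linear_combination (G - G') * hs2
    · refine ⟨qB / l, ?_⟩
      rw [h] at hqB
      push_cast
      rw [← hqB]
      field_simp
      linear_combination (G - G') * hs2
  obtain ⟨y, hy⟩ := hQs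
  have hsum : (A : ℂ) ^ 2 + l * y ^ 2 = 4 * (p : ℂ) ^ f := by
    have e : (G - G') ^ 2 = -(l : ℂ) * y ^ 2 := by rw [hy, mul_pow, hs2]; ring
    rw [← hA, ← hGG]; linear_combination e
  have hsumQ : (A : ℚ) ^ 2 + l * y ^ 2 = 4 * (p : ℚ) ^ f := by exact_mod_cast hsum
  obtain ⟨B, hB⟩ := rat_of_mul_sq hl.out y (4 * (p : ℤ) ^ f - A ^ 2) (by push_cast; linear_combination hsumQ)
  refine ⟨A, B, hA, by rw [hy, hB]; simp, ?_⟩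
  rw [hB] at hsumQ
  exact_mod_cast hsumQ

lemma final (hl4 : l % 4 = 3) (hl3 : 3 < l) (hr : 1 ≤ r) (hN : N = l ^ r) (hNp : N.Coprime p)
    (hf : orderOf (p : ZMod N) = f) (hind : f = Nat.totient N / 2)
    (hcard : Fintype.card F = p ^ f) (χ : MulChar F ℂ) (ho : orderOf χ = N) :
    Odd f ∧ Odd (classNumSqrtNeg l) ∧
      ∃ a b : ℤ,
        4 * (p : ℤ) ^ classNumSqrtNeg l = a ^ 2 + (l : ℤ) * b ^ 2 ∧
        a ≡ -2 * (p : ℤ) ^ ((f + classNumSqrtNeg l) / 2) [ZMOD (l : ℤ)] ∧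
        gaussSum χ (psi p F) =
          (1 / 2 : ℂ) * (p : ℂ) ^ (((f : ℤ) - (classNumSqrtNeg l : ℤ)) / 2) *
            ((a : ℂ) + (b : ℂ) * sqrtNeg l) := by
  have hfo := (f_eq hl4 hr hN hind).2.1
  have hho := class_odd l hl4 hl3
  refine ⟨hfo, hho, ?_⟩
  obtain ⟨hle, V, hV, hv1, hv2⟩ := val_final hl4 hl3 hr hN hf hind hcard χ ho
  obtain ⟨A, B, hA, hB, hAB⟩ := gauss_AB hl4 hl3 hr hN hNp hf hind hcard χ ho
  generalize classNumSqrtNeg l = h at *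
  have hχ : χ ^ N = 1 := by rw [← ho, pow_orderOf_eq_one]
  have hχ' : χ⁻¹ ^ N = 1 := by rw [inv_pow, hχ, inv_one]
  obtain ⟨W, hW⟩ := exists_val l
  have hcong : (l : ℤ) ∣ A + 2 := by
    apply dvd_of_val_lt W hl.out hW
    have := W.valuation.map_add_lt (gauss_cong (p := p) W hW hN χ hχ) (gauss_cong (p := p) W hW hN χ⁻¹ hχ')
    convert this using 2
    push_cast
    rw [← hA]; ring
  set m := (f - h) / 2 with hm
  have hfm : f = 2 * m + h := by
    obtain ⟨u, hu⟩ := hfo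
    obtain ⟨w, hw⟩ := hho
    omega
  have hmm : (f + h) / 2 = f - m := by omega
  have hlN : l ∣ N := by rw [hN]; exact dvd_pow_self _ (by omega)
  have hpl : p.Coprime l := Nat.Coprime.coprime_dvd_right hlN hNp.symm
  have hdA : (p : ℤ) ^ m ∣ A := by
    apply dvd_of_val_le V hp.out hV
    rw [← hA]; exact V.valuation.map_add_le hv1 hv2
  have hdB : (p : ℤ) ^ m ∣ B := by
    apply dvd_of_val_le V hp.out hV
    have h1 : V.valuation ((B : ℂ) * sqrtNeg l) ≤ V.valuation (p : ℂ) ^ m := by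
      rw [← hB]; exact V.valuation.map_sub_le hv1 hv2
    have h2 : V.valuation (sqrtNeg l) = 1 := by
      have h3 : V.valuation (l : ℂ) = 1 := by
        apply le_antisymm
        · exact_mod_cast val_int V (intCast_int (l : ℤ))
        · by_contra hlt
          have := dvd_of_val_lt V hp.out hV (l : ℤ) (by push_cast; exact not_le.1 hlt)
          have := Int.natCast_dvd_natCast.1 this
          exact (Nat.Prime.coprime_iff_not_dvd hp.out).1 hpl this
      have h4 : V.valuation (sqrtNeg l) ^ 2 = 1 := by
        rw [← map_pow, sqrtNeg_sq, Valuation.map_neg, h3]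
      exact (pow_eq_one_iff_of_nonneg zero_le two_ne_zero).1 h4
    rwa [map_mul, h2, mul_one] at h1
  obtain ⟨a, ha⟩ := hdA
  obtain ⟨b, hb⟩ := hdB
  have hp0 : (p : ℤ) ≠ 0 := by exact_mod_cast hp.out.ne_zero
  refine ⟨a, b, ?_, ?_, ?_⟩
  · have h1 : (p : ℤ) ^ (2 * m) * (a ^ 2 + l * b ^ 2) = (p : ℤ) ^ (2 * m) * (4 * (p : ℤ) ^ h) := by
      rw [ha, hb] at hAB
      rw [hfm] at hAB
      rw [pow_add] at hAB
      rw [pow_mul'] at hAB ⊢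
      linear_combination hAB
    exact (mul_left_cancel₀ (pow_ne_zero _ hp0) h1).symm
  · rw [hmm]
    have hpf : (p : ℤ) ^ f ≡ 1 [ZMOD (l : ℤ)] := by
      have h1 : ((p ^ f : ℕ) : ZMod N) = ((1 : ℕ) : ZMod N) := by
        push_cast; rw [← hf]; exact pow_orderOf_eq_one _
      rw [ZMod.natCast_eq_natCast_iff] at h1
      have h2 := Int.natCast_modEq_iff.2 (h1.of_dvd hlN)
      exact_mod_cast h2
    have hA2 : A ≡ -2 [ZMOD (l : ℤ)] := by
      apply Int.ModEq.symm
      rw [Int.modEq_iff_dvd]; convert hcong using 1; ring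
    calc a = a * 1 := by ring
      _ ≡ a * (p : ℤ) ^ f [ZMOD (l : ℤ)] := (Int.ModEq.mul_left a hpf).symm
      _ = A * (p : ℤ) ^ (f - m) := by
        rw [ha]
        have : (p : ℤ) ^ f = (p : ℤ) ^ m * (p : ℤ) ^ (f - m) := by rw [← pow_add]; congr 1; omega
        rw [this]; ring
      _ ≡ -2 * (p : ℤ) ^ (f - m) [ZMOD (l : ℤ)] := Int.ModEq.mul_right _ hA2
  · have hz : ((f : ℤ) - (h : ℤ)) / 2 = (m : ℤ) := by omega
    rw [hz, zpow_natCast]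
    rw [ha] at hA
    rw [hb] at hB
    push_cast at hA hB
    linear_combination (1 / 2 : ℂ) * hA + (1 / 2 : ℂ) * hB
end
end IdxTwo

theorem statement3 (p l r N f : ℕ) (hp : p.Prime) (hl : l.Prime) (hl4 : l % 4 = 3)
    (hl3 : 3 < l) (hr : 1 ≤ r) (hN : N = l ^ r) (hNp : Nat.gcd N p = 1)
    (hf : orderOf (p : ZMod N) = f) (hind : f = Nat.totient N / 2)
    (F : Type) [Field F] [Fintype F] [Algebra (ZMod p) F]
    (hcard : Fintype.card F = p ^ f)
    (χ : MulChar F ℂ) (hχord : orderOf χ = N) :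
    Odd f ∧ Odd (classNumSqrtNeg l) ∧
      ∃ a b : ℤ,
        4 * (p : ℤ) ^ classNumSqrtNeg l = a ^ 2 + (l : ℤ) * b ^ 2 ∧
        a ≡ -2 * (p : ℤ) ^ ((f + classNumSqrtNeg l) / 2) [ZMOD (l : ℤ)] ∧
        gaussSumN p χ 1 =
          (1 / 2 : ℂ) * (p : ℂ) ^ (((f : ℤ) - (classNumSqrtNeg l : ℤ)) / 2) *
            ((a : ℂ) + (b : ℂ) * sqrtNeg l) := by
  haveI := Fact.mk hp
  haveI := Fact.mk hl
  rw [IdxTwo.gaussSumN_eq p χ 1, pow_one]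
  exact IdxTwo.final hl4 hl3 hr hN hNp hf hind hcard χ hχord
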